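/- arXiv:2006.10324 — 11 statements merged into one kernel-verified Lean document; each statement's English description precedes it below -/
import Mathlib

section
/- Let F be a field of characteristic different from 2, V an F-vector space of dimension n ≥ 3, and X : V^{n−1} → V an alternating multilinear map which is an (n−1)-fold cross product relative to both nondegenerate symmetric bilinear forms b and b' on V. Then there exists a scalar μ ∈ F with μ^{n−2} = 1 such that b' = μ·b. In particular, if n = 3 then b' = b. -/
/-!
Since `X v` is orthogonal to every `v i`, the map `(v, w) ↦ b (X v) w` is an alternating form of
top degree. Such forms are unique up to a scalar, so `b' (X v) w = μ * b (X v) w` for some `μ`.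
Moreover a nonzero top-degree form has enough slices to span the dual space: filling all slots
but one with members of a basis gives a nonzero multiple of a coordinate function. Hence the values
of `X` span `V` and `b' = μ • b`. Comparing the two Gram determinants at some `v` for which `X v`
is not `b`-isotropic gives `μ ^ (n - 1) = μ`. Such a `v` is any basis of `{y | b y x = 0}` with
`b x x ≠ 0`, because `b` is nondegenerate on this hyperplane.
-/

/-- An `r`-fold cross product on `V` relative to the bilinear form `b`. -/
def IsCrossProduct {F V : Type*} [Field F] [AddCommGroup V] [Module F V] {r : ℕ}
    (b : LinearMap.BilinForm F V) (X : MultilinearMap F (fun _ : Fin r => V) V) : Prop :=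
  (∀ v : Fin r → V, ∀ i : Fin r, b (X v) (v i) = 0) ∧
  (∀ v : Fin r → V, b (X v) (X v) = (Matrix.of fun i j : Fin r => b (v i) (v j)).det)

section TopDegree

variable {R M N : Type*} [CommRing R] [AddCommGroup M] [Module R M] [AddCommGroup N] [Module R N]
  {m : ℕ}

/-- The alternating map `(v, w) ↦ f v w` in `m + 1` arguments attached to an alternating map `f`
in `m` arguments with values in linear maps such that `f v` vanishes on each `v i`; the extra
argument `w` comes last. It turns a cross product `X` into the form `(v, w) ↦ b (X v) w`. -/
def alternatingUncurryRight (f : M [⋀^Fin m]→ₗ[R] (M →ₗ[R] N)) (hf : ∀ v i, f v (v i) = 0) :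
    M [⋀^Fin (m + 1)]→ₗ[R] N :=
  { MultilinearMap.uncurryRight (M := fun _ : Fin (m + 1) => M) f.toMultilinearMap with
    map_eq_zero_of_eq' := by
      intro v i j hv hij
      change f (Fin.init v) (v (Fin.last m)) = 0
      cases i using Fin.lastCases with
      | last =>
        cases j using Fin.lastCases with
        | last => exact absurd rfl hij
        | cast j => rw [hv]; exact hf (Fin.init v) j
      | cast i =>
        cases j using Fin.lastCases with
        | last => rw [← hv]; exact hf (Fin.init v) i
        | cast j =>
          rw [f.map_eq_zero_of_eq (Fin.init v) hv (ne_of_apply_ne _ hij), LinearMap.zero_apply] }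

lemma alternatingUncurryRight_apply (f : M [⋀^Fin m]→ₗ[R] (M →ₗ[R] N))
    (hf : ∀ v i, f v (v i) = 0) (v : Fin (m + 1) → M) :
    alternatingUncurryRight f hf v = f (Fin.init v) (v (Fin.last m)) :=
  rfl

lemma alternatingUncurryRight_snoc (f : M [⋀^Fin m]→ₗ[R] (M →ₗ[R] N))
    (hf : ∀ v i, f v (v i) = 0) (v : Fin m → M) (w : M) :
    alternatingUncurryRight f hf (Fin.snoc (α := fun _ => M) v w) = f v w := by
  rw [alternatingUncurryRight_apply, Fin.init_snoc, Fin.snoc_last]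

lemma alternatingUncurryRight_ne_zero {f : M [⋀^Fin m]→ₗ[R] (M →ₗ[R] N)}
    (hf : ∀ v i, f v (v i) = 0) (hne : f ≠ 0) : alternatingUncurryRight f hf ≠ 0 := by
  contrapose! hne
  ext v w
  rw [← alternatingUncurryRight_snoc f hf, hne]
  rfl

end TopDegree

section Dual

open Module

variable {F V : Type*} [Field F] [AddCommGroup V] [Module F V] {m : ℕ}

lemma exists_alternatingMap_eq_smul {ι : Type*} [Finite ι] (e : Basis ι F V) {f : V [⋀^ι]→ₗ[F] F}
    (hf : f ≠ 0) (g : V [⋀^ι]→ₗ[F] F) : ∃ μ : F, g = μ • f := by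
  have hfe : f e ≠ 0 := (f.map_basis_ne_zero_iff e).mpr hf
  refine ⟨g e / f e, sub_eq_zero.mp ((AlternatingMap.map_basis_eq_zero_iff e _).mp ?_)⟩
  simp [hfe]

lemma exists_eq_smul_of_apply_self_eq_zero (e : Basis (Fin (m + 1)) F V)
    {f g : V [⋀^Fin m]→ₗ[F] Dual F V} (hf : ∀ v i, f v (v i) = 0) (hg : ∀ v i, g v (v i) = 0)
    (hne : f ≠ 0) : ∃ μ : F, g = μ • f := by
  obtain ⟨μ, hμ⟩ := exists_alternatingMap_eq_smul e (alternatingUncurryRight_ne_zero hf hne)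
    (alternatingUncurryRight g hg)
  refine ⟨μ, AlternatingMap.ext fun v => LinearMap.ext fun w => ?_⟩
  rw [← alternatingUncurryRight_snoc g hg, hμ, AlternatingMap.smul_apply,
    alternatingUncurryRight_snoc]
  rfl

lemma coord_last_mem_span_range (e : Basis (Fin (m + 1)) F V) {f : V [⋀^Fin m]→ₗ[F] Dual F V}
    (hf : ∀ v i, f v (v i) = 0) (hne : f ≠ 0) :
    e.coord (Fin.last m) ∈ Submodule.span F (Set.range f) := by
  have hlast : f (Fin.init e) (e (Fin.last m)) ≠ 0 :=
    (AlternatingMap.map_basis_ne_zero_iff e _).mpr (alternatingUncurryRight_ne_zero hf hne)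
  have hcoord : f (Fin.init e) = f (Fin.init e) (e (Fin.last m)) • e.coord (Fin.last m) := by
    refine e.ext fun j => ?_
    cases j using Fin.lastCases with
    | last => simp
    | cast j => simpa [Fin.init] using! hf (Fin.init e) j
  rw [← Submodule.smul_mem_iff _ hlast, ← hcoord]
  exact Submodule.subset_span ⟨_, rfl⟩

lemma span_range_eq_top_of_apply_self_eq_zero (e : Basis (Fin (m + 1)) F V)
    {f : V [⋀^Fin m]→ₗ[F] Dual F V} (hf : ∀ v i, f v (v i) = 0) (hne : f ≠ 0) :
    Submodule.span F (Set.range f) = ⊤ := by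
  rw [eq_top_iff, ← e.dualBasis.span_eq, Submodule.span_le]
  rintro _ ⟨i, rfl⟩
  have hcoord : (e.reindex (Equiv.swap i (Fin.last m))).coord (Fin.last m) = e.dualBasis i := by
    ext; simp
  exact hcoord ▸ coord_last_mem_span_range _ hf hne

end Dual

section BilinForm

open Module
open LinearMap (BilinForm)

variable {F V : Type*} [Field F] [AddCommGroup V] [Module F V] {m : ℕ}
  {b b' : BilinForm F V}

lemma pow_eq_self_of_isCrossProduct_smul {X : MultilinearMap F (fun _ : Fin m => V) V} {μ : F}
    (hb : IsCrossProduct b X) (hb' : IsCrossProduct (μ • b) X) {v : Fin m → V}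
    (hv : b (X v) (X v) ≠ 0) : μ ^ m = μ := by
  have hgram : (Matrix.of fun i j => (μ • b) (v i) (v j)) =
      μ • Matrix.of fun i j => b (v i) (v j) := rfl
  have h := hb'.2 v
  rw [hgram, Matrix.det_smul, ← hb.2 v, Fintype.card_fin, LinearMap.smul_apply,
    LinearMap.smul_apply, smul_eq_mul] at h
  exact (mul_right_cancel₀ hv h).symm

lemma not_isAlt_of_isSymm (hchar : (2 : F) ≠ 0) (hne : b ≠ 0) (hsymm : LinearMap.IsSymm b) :
    ¬ b.IsAlt := by
  have : Invertible (2 : F) := invertibleOfNonzero hchar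
  obtain ⟨x, hx⟩ := BilinForm.exists_bilinForm_self_ne_zero hne hsymm
  exact fun halt => hx (halt x)

variable [FiniteDimensional F V]

lemma exists_eq_smul_of_orthogonal_values (hdim : finrank F V = m + 1) (hb : b.Nondegenerate)
    {X : V [⋀^Fin m]→ₗ[F] V} (hX : X ≠ 0) (horth : ∀ v i, b (X v) (v i) = 0)
    (horth' : ∀ v i, b' (X v) (v i) = 0) : ∃ μ : F, b' = μ • b := by
  have e : Basis (Fin (m + 1)) F V := finBasisOfFinrankEq F V hdim
  have hinj : Function.Injective b := LinearMap.ker_eq_bot.mp hb.ker_eq_bot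
  have hbX : b.compAlternatingMap X ≠ 0 := by
    contrapose! hX
    ext v
    exact hinj ((DFunLike.congr_fun hX v).trans (map_zero b).symm)
  obtain ⟨μ, hμ⟩ := exists_eq_smul_of_apply_self_eq_zero e (f := b.compAlternatingMap X)
    (g := b'.compAlternatingMap X) horth horth' hbX
  have hrange : LinearMap.range b = ⊤ := LinearMap.range_eq_top.mpr (b.toDual hb).surjective
  have hspan_comp : Submodule.span F (Set.range (b ∘ X)) = ⊤ :=
    span_range_eq_top_of_apply_self_eq_zero e (f := b.compAlternatingMap X) horth hbX
  have hspan : Submodule.span F (Set.range X) = ⊤ := by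
    refine Submodule.map_injective_of_injective hinj ?_
    rw [Submodule.map_top, hrange, LinearMap.map_span, ← Set.range_comp, hspan_comp]
  exact ⟨μ, LinearMap.ext_on_range hspan (DFunLike.congr_fun hμ)⟩

lemma exists_det_gram_ne_zero (hdim : finrank F V = m + 1) (hb : b.Nondegenerate)
    (halt : ¬ b.IsAlt) :
    ∃ v : Fin m → V, (Matrix.of fun i j => b (v i) (v j)).det ≠ 0 := by
  obtain ⟨x, hx⟩ : ∃ x, b x x ≠ 0 := not_forall.mp halt
  let H := b.flip.orthogonal (F ∙ x)
  have hcompl : IsCompl (F ∙ x) H := BilinForm.isCompl_span_singleton_orthogonal hx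
  have hker : LinearMap.ker (b.restrict H) = ⊥ := by
    rw [BilinForm.ker_restrict_eq_of_codisjoint hcompl.symm.codisjoint, hb.ker_eq_bot]
    · exact Submodule.ker_subtype H
    · exact fun y hy z hz => hy z hz
  have hH : finrank F H = m := by
    have hx0 : x ≠ 0 := by rintro rfl; simp at hx
    have := Submodule.finrank_add_eq_of_isCompl hcompl
    rw [finrank_span_singleton hx0] at this
    omega
  let e : Basis (Fin m) F H := finBasisOfFinrankEq F H hH
  refine ⟨fun i => e i, ?_⟩
  have hdet := (BilinForm.nondegenerate_iff_det_ne_zero e).mp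
    (BilinForm.nondegenerate_iff_ker_eq_bot.mpr hker)
  convert hdet
  ext i j
  simp

theorem stmt3_general {n : ℕ} (hn : 2 ≤ n) (hdim : finrank F V = n) (hb : b.Nondegenerate)
    (hbalt : ¬ b.IsAlt) (hb' : b' ≠ 0) (X : V [⋀^Fin (n - 1)]→ₗ[F] V)
    (hX : IsCrossProduct b X.toMultilinearMap) (hX' : IsCrossProduct b' X.toMultilinearMap) :
    (∃ μ : F, μ ^ (n - 2) = 1 ∧ b' = μ • b) ∧ (n = 3 → b' = b) := by
  obtain ⟨m, rfl⟩ : ∃ m, n = m + 2 := ⟨n - 2, by omega⟩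
  obtain ⟨v, hv⟩ := exists_det_gram_ne_zero hdim hb hbalt
  have hXv : b (X v) (X v) ≠ 0 := (hX.2 v).trans_ne hv
  have hX0 : X ≠ 0 := by rintro rfl; simp at hXv
  obtain ⟨μ, rfl⟩ := exists_eq_smul_of_orthogonal_values hdim hb hX0 hX.1 hX'.1
  have hμ : μ ≠ 0 := by rintro rfl; simp at hb'
  have hpow : μ ^ m = 1 := mul_right_cancel₀ hμ <| by
    rw [← pow_succ, one_mul]; exact pow_eq_self_of_isCrossProduct_smul hX hX' hXv
  refine ⟨⟨μ, hpow, rfl⟩, fun hm => ?_⟩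
  obtain rfl : m = 1 := by omega
  rw [← pow_one μ, hpow, one_smul]

end BilinForm

/-- an alternating `(n-1)`-fold cross product relative to two
nondegenerate symmetric bilinear forms `b`, `b'` forces `b' = μ • b` with `μ^(n-2) = 1`;
in particular for `n = 3`, `b' = b`. -/
theorem stmt3 (F V : Type*) [Field F] [AddCommGroup V] [Module F V] [FiniteDimensional F V]
    (hchar : (2 : F) ≠ 0)
    (n : ℕ) (hn : 3 ≤ n) (hdim : Module.finrank F V = n)
    (b b' : LinearMap.BilinForm F V)
    (hbnd : b.Nondegenerate) (hbsymm : ∀ u v : V, b u v = b v u)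
    (hb'nd : b'.Nondegenerate) (hb'symm : ∀ u v : V, b' u v = b' v u)
    (X : MultilinearMap F (fun _ : Fin (n - 1) => V) V)
    (halt : ∀ (v : Fin (n - 1) → V) (i j : Fin (n - 1)), i ≠ j → v i = v j → X v = 0)
    (hXb : IsCrossProduct b X) (hXb' : IsCrossProduct b' X) :
    (∃ μ : F, μ ^ (n - 2) = 1 ∧ b' = μ • b) ∧ (n = 3 → b' = b) := by
  have : Nontrivial V := Module.nontrivial_of_finrank_pos (R := F) (by omega)
  exact stmt3_general (by omega) hdim hbnd (not_isAlt_of_isSymm hchar hbnd.ne_zero ⟨hbsymm⟩)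
    hb'nd.ne_zero { X with map_eq_zero_of_eq' := fun v i j h hij => halt v i j hij h } hXb hXb'
end

section
/- Let F be a field of characteristic different from 2, V an F-vector space of dimension 8, and X : V³ → V an alternating multilinear map which is a 3-fold cross product relative to both nondegenerate symmetric bilinear forms b and b' on V. Then either b' = b or b' = −b. -/
section

open Module

section CommRing

variable {R M : Type*} [CommRing R] [AddCommGroup M] [Module R M] {b b' : LinearMap.BilinForm R M}

/-- The mixed Gram matrix `(b(uᵢ, vⱼ))` of two families of vectors. Allowing `u ≠ v` makes its
determinant a polarization of the Gram determinant. -/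
def gramMatrix {ι : Type*} (b : LinearMap.BilinForm R M) (u v : ι → M) : Matrix ι ι R :=
  Matrix.of fun i j => b (u i) (v j)

lemma transpose_gramMatrix {ι : Type*} (hb : b.IsSymm) (u v : ι → M) :
    (gramMatrix b u v).transpose = gramMatrix b v u :=
  Matrix.ext fun i j => hb.eq (u j) (v i)

lemma exists_det_gramMatrix_cons_eq {r : ℕ} (b : LinearMap.BilinForm R M) (v : Fin r → M) (x : M) :
    ∃ w ∈ Submodule.span R (Set.range v), ∀ y,
      (gramMatrix b (Fin.cons x v) (Fin.cons y v)).det =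
        b ((gramMatrix b v v).det • x + w) y := by
  let minor (i : Fin r) : Matrix (Fin r) (Fin r) R :=
    gramMatrix b ((Fin.cons x v : Fin (r + 1) → M) ∘ i.succ.succAbove) v
  refine ⟨∑ i, ((-1) ^ (i.succ : ℕ) * (minor i).det) • v i,
    Submodule.sum_mem _ fun i _ => Submodule.smul_mem _ _ (Submodule.subset_span ⟨i, rfl⟩),
    fun y => ?_⟩
  rw [Matrix.det_succ_column_zero, Fin.sum_univ_succ]
  simp only [map_add, map_sum, map_smul, LinearMap.add_apply, LinearMap.sum_apply,
    LinearMap.smul_apply, smul_eq_mul]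
  congr 1
  · rw [Fin.val_zero, pow_zero, one_mul, mul_comm]
    rfl
  · refine Finset.sum_congr rfl fun i _ => ?_
    rw [mul_right_comm]
    rfl

lemma ext_of_isOrthoᵢ {ι : Type*} (v : Basis ι R M) (hv : b.IsOrthoᵢ v) (hv' : b'.IsOrthoᵢ v)
    (hdiag : ∀ i, b (v i) (v i) = b' (v i) (v i)) : b = b' := by
  refine LinearMap.BilinForm.ext_basis v fun i j => ?_
  rcases eq_or_ne i j with rfl | hij
  · exact hdiag i
  · rw [LinearMap.isOrthoᵢ_def.1 hv i j hij, LinearMap.isOrthoᵢ_def.1 hv' i j hij]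

lemma eq_or_eq_neg_of_mul_eq_mul [NoZeroDivisors R] {ι : Type*}
    (third : ∀ i j : ι, ∃ k, k ≠ i ∧ k ≠ j) {m q : ι → R} (hq : ∀ i, q i ≠ 0)
    (hmul : ∀ i j, i ≠ j → m i * m j = q i * q j) : m = q ∨ m = -q := by
  have hratio (i j : ι) : m i * q j = m j * q i := by
    obtain ⟨k, hki, hkj⟩ := third i j
    apply mul_right_cancel₀ (hq k)
    linear_combination m j * hmul i k hki.symm - m i * hmul j k hkj.symm
  rcases isEmpty_or_nonempty ι with _ | ⟨⟨i⟩⟩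
  · exact .inl (Subsingleton.elim _ _)
  obtain ⟨j, hji, -⟩ := third i i
  have hsq : m i * m i = q i * q i := by
    apply mul_right_cancel₀ (hq j)
    linear_combination m i * hratio i j + q i * hmul i j hji.symm
  rcases mul_self_eq_mul_self_iff.1 hsq with h | h
  · refine .inl (funext fun k => mul_right_cancel₀ (hq i) ?_)
    linear_combination hratio k i + q k * h
  · refine .inr (funext fun k => mul_right_cancel₀ (hq i) ?_)
    rw [Pi.neg_apply]
    linear_combination hratio k i + q k * h

end CommRing

variable {F V : Type*} [Field F] [AddCommGroup V] [Module F V] {b b' : LinearMap.BilinForm F V}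

namespace IsCrossProduct

variable {r : ℕ} {X : MultilinearMap F (fun _ : Fin (r + 1) => V) V}

lemma apply_cons_right_eq_neg (hX : IsCrossProduct b X) (hb : b.IsSymm) (v : Fin r → V) (x y : V) :
    b (X (Fin.cons x v)) y = -b x (X (Fin.cons y v)) := by
  have hdiag (z : V) : b (X (Fin.cons z v)) z = 0 := hX.1 (Fin.cons z v) 0
  have h := hdiag (x + y)
  simp only [X.cons_add, map_add, LinearMap.add_apply, hdiag] at h
  rw [hb.eq x]
  linear_combination h

lemma apply_cons_apply_cons_eq_det (hX : IsCrossProduct b X) (h2 : (2 : F) ≠ 0) (hb : b.IsSymm)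
    (v : Fin r → V) (x y : V) :
    b (X (Fin.cons x v)) (X (Fin.cons y v)) =
      (gramMatrix b (Fin.cons x v) (Fin.cons y v)).det := by
  let B (x y : V) : F := (gramMatrix b (Fin.cons x v) (Fin.cons y v)).det
  have hB_symm (x y : V) : B x y = B y x := by
    simp only [B]
    rw [← transpose_gramMatrix hb, Matrix.det_transpose]
  have hB_add (x y z : V) : B x (y + z) = B x y + B x z := by
    obtain ⟨w, -, hw⟩ := exists_det_gramMatrix_cons_eq b v x
    simp only [B, hw, map_add]
  have hdiag (z : V) : b (X (Fin.cons z v)) (X (Fin.cons z v)) = B z z := hX.2 (Fin.cons z v)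
  have h := hdiag (x + y)
  rw [X.cons_add, hB_add, hB_symm _ x, hB_symm _ y, hB_add, hB_add, hB_symm y x] at h
  simp only [map_add, LinearMap.add_apply, hdiag] at h
  rw [hb.eq (X (Fin.cons y v))] at h
  apply mul_left_cancel₀ h2
  linear_combination h

lemma apply_cons_apply_cons_add_smul_mem_span (hX : IsCrossProduct b X) (h2 : (2 : F) ≠ 0)
    (hbnd : b.Nondegenerate) (hb : b.IsSymm) (v : Fin r → V) (x : V) :
    X (Fin.cons (X (Fin.cons x v)) v) + (gramMatrix b v v).det • x ∈
      Submodule.span F (Set.range v) := by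
  obtain ⟨w, hw_mem, hw⟩ := exists_det_gramMatrix_cons_eq b v x
  have heq : X (Fin.cons (X (Fin.cons x v)) v) + ((gramMatrix b v v).det • x + w) = 0 := by
    refine hbnd.1 _ fun y => ?_
    rw [map_add, LinearMap.add_apply, ← hw, hX.apply_cons_right_eq_neg hb,
      hX.apply_cons_apply_cons_eq_det h2 hb, neg_add_cancel]
  rw [← add_assoc] at heq
  exact eq_neg_of_add_eq_zero_left heq ▸ Submodule.neg_mem _ hw_mem

lemma det_gramMatrix_eq (hX : IsCrossProduct b X) (hX' : IsCrossProduct b' X) (h2 : (2 : F) ≠ 0)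
    (hr : r < finrank F V) (hbnd : b.Nondegenerate) (hb : b.IsSymm) (hbnd' : b'.Nondegenerate)
    (hb' : b'.IsSymm) (v : Fin r → V) :
    (gramMatrix b' v v).det = (gramMatrix b v v).det := by
  by_contra hne
  have hspan : Submodule.span F (Set.range v) = ⊤ := by
    refine eq_top_iff.2 fun x _ => (Submodule.smul_mem_iff _ (sub_ne_zero.2 hne)).1 ?_
    have h := Submodule.sub_mem _
      (hX'.apply_cons_apply_cons_add_smul_mem_span h2 hbnd' hb' v x)
      (hX.apply_cons_apply_cons_add_smul_mem_span h2 hbnd hb v x)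
    rwa [add_sub_add_left_eq_sub, ← sub_smul] at h
  have hle := finrank_range_le_card (R := F) v
  rw [Set.finrank, hspan, finrank_top, Fintype.card_fin] at hle
  exact hr.not_ge hle

end IsCrossProduct

lemma mul_sub_mul_eq_of_det_gramMatrix_eq (h2 : (2 : F) ≠ 0) (hb : b.IsSymm) (hb' : b'.IsSymm)
    (hdet : ∀ v : Fin 2 → V, (gramMatrix b' v v).det = (gramMatrix b v v).det) (x y z : V) :
    b' x x * b' y z - b' x y * b' x z = b x x * b y z - b x y * b x z := by
  have hpair (y : V) : b' x x * b' y y - b' x y * b' x y = b x x * b y y - b x y * b x y := by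
    simpa [gramMatrix, Matrix.det_fin_two, hb.eq y x, hb'.eq y x] using hdet ![x, y]
  have h := hpair (y + z)
  simp only [map_add, LinearMap.add_apply] at h
  rw [hb.eq z y, hb'.eq z y] at h
  apply mul_left_cancel₀ h2
  linear_combination h - hpair y - hpair z

lemma apply_eq_zero_of_det_gramMatrix_eq (h2 : (2 : F) ≠ 0) (hb : b.IsSymm) (hb' : b'.IsSymm)
    (hdet : ∀ v : Fin 2 → V, (gramMatrix b' v v).det = (gramMatrix b v v).det) {x y z : V}
    (hxy : b x y = 0) (hxz : b x z = 0) (hyz : b y z = 0) (hx : b x x ≠ 0) (hz : b z z ≠ 0) :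
    b' x y = 0 := by
  have hxyz : b' x x * b' y z - b' x y * b' x z = 0 := by
    simpa [hxy, hyz] using mul_sub_mul_eq_of_det_gramMatrix_eq h2 hb hb' hdet x y z
  have hxzz : b' x x * b' z z - b' x z * b' x z = b x x * b z z := by
    simpa [hxz] using mul_sub_mul_eq_of_det_gramMatrix_eq h2 hb hb' hdet x z z
  have hzxy : b' z z * b' x y - b' x z * b' y z = 0 := by
    simpa [hxy, hxz, hyz, hb.eq z, hb'.eq z] using
      mul_sub_mul_eq_of_det_gramMatrix_eq h2 hb hb' hdet z x y
  refine (mul_eq_zero_iff_left (mul_ne_zero hx hz)).1 ?_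
  linear_combination b' x z * hxyz + b' x x * hzxy - b' x y * hxzz

lemma isOrthoᵢ_of_det_gramMatrix_eq {ι : Type*} (third : ∀ i j : ι, ∃ k, k ≠ i ∧ k ≠ j)
    (h2 : (2 : F) ≠ 0) (hb : b.IsSymm) (hb' : b'.IsSymm)
    (hdet : ∀ v : Fin 2 → V, (gramMatrix b' v v).det = (gramMatrix b v v).det)
    {v : ι → V} (hv : b.IsOrthoᵢ v) (hq : ∀ i, b (v i) (v i) ≠ 0) : b'.IsOrthoᵢ v := by
  refine LinearMap.isOrthoᵢ_def.2 fun i j hij => ?_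
  obtain ⟨k, hki, hkj⟩ := third i j
  exact apply_eq_zero_of_det_gramMatrix_eq h2 hb hb' hdet
    (hv hij) (hv hki.symm) (hv hkj.symm) (hq i) (hq k)

lemma eq_or_eq_neg_of_det_gramMatrix_eq (h2 : (2 : F) ≠ 0) (hdim : 2 < finrank F V)
    (hbnd : b.Nondegenerate) (hb : b.IsSymm) (hb' : b'.IsSymm)
    (hdet : ∀ v : Fin 2 → V, (gramMatrix b' v v).det = (gramMatrix b v v).det) :
    b' = b ∨ b' = -b := by
  have : FiniteDimensional F V := finite_of_finrank_pos (by lia)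
  have : Invertible (2 : F) := invertibleOfNonzero h2
  obtain ⟨v, hv⟩ :=
    LinearMap.BilinForm.exists_orthogonal_basis (LinearMap.BilinForm.isSymm_iff.1 hb)
  have third (i j : Fin (finrank F V)) : ∃ k, k ≠ i ∧ k ≠ j :=
    Fin.exists_ne_and_ne_of_two_lt i j hdim
  have hq (i) : b (v i) (v i) ≠ 0 := hv.not_isOrtho_basis_self_of_separatingLeft hbnd.1 i
  have hv' : b'.IsOrthoᵢ v := isOrthoᵢ_of_det_gramMatrix_eq third h2 hb hb' hdet hv hq
  have hmul (i j) (hij : i ≠ j) :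
      b' (v i) (v i) * b' (v j) (v j) = b (v i) (v i) * b (v j) (v j) := by
    simpa [LinearMap.isOrthoᵢ_def.1 hv i j hij, LinearMap.isOrthoᵢ_def.1 hv' i j hij] using
      mul_sub_mul_eq_of_det_gramMatrix_eq h2 hb hb' hdet (v i) (v j) (v j)
  rcases eq_or_eq_neg_of_mul_eq_mul third hq hmul with h | h
  · exact .inl (ext_of_isOrthoᵢ v hv' hv fun i => congrFun h i)
  · refine .inr (ext_of_isOrthoᵢ v hv' ?_ fun i => congrFun h i)
    exact LinearMap.isOrthoᵢ_def.2 fun i j hij => neg_eq_zero.2 (hv hij)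

theorem stmt4_general (h2 : (2 : F) ≠ 0) (hdim : 2 < finrank F V)
    (hbnd : b.Nondegenerate) (hb : b.IsSymm) (hbnd' : b'.Nondegenerate) (hb' : b'.IsSymm)
    {X : MultilinearMap F (fun _ : Fin 3 => V) V}
    (hX : IsCrossProduct b X) (hX' : IsCrossProduct b' X) :
    b' = b ∨ b' = -b :=
  eq_or_eq_neg_of_det_gramMatrix_eq h2 hdim hbnd hb hb'
    (hX.det_gramMatrix_eq hX' h2 hdim hbnd hb hbnd' hb')

end

/-- an alternating 3-fold cross product on an 8-dimensional space relative to
two nondegenerate symmetric bilinear forms `b`, `b'` forces `b' = b` or `b' = -b`. -/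
theorem stmt4 (F V : Type*) [Field F] [AddCommGroup V] [Module F V] [FiniteDimensional F V]
    (hchar : (2 : F) ≠ 0)
    (hdim : Module.finrank F V = 8)
    (b b' : LinearMap.BilinForm F V)
    (hbnd : b.Nondegenerate) (hbsymm : ∀ u v : V, b u v = b v u)
    (hb'nd : b'.Nondegenerate) (hb'symm : ∀ u v : V, b' u v = b' v u)
    (X : MultilinearMap F (fun _ : Fin 3 => V) V)
    (halt : ∀ (v : Fin 3 → V) (i j : Fin 3), i ≠ j → v i = v j → X v = 0)
    (hXb : IsCrossProduct b X) (hXb' : IsCrossProduct b' X) :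
    b' = b ∨ b' = -b := by
  exact stmt4_general hchar (by omega) hbnd ⟨hbsymm⟩ hb'nd ⟨hb'symm⟩ hXb hXb'
end

section
/- Let F be a field of characteristic different from 2, V an F-vector space of dimension n ≥ 3, and X : V^{n−1} → V an alternating (n−1)-fold cross product relative to a nondegenerate symmetric bilinear form b. Then an invertible linear map φ : V → V satisfies φ(X(v₁,…,v_{n−1})) = X(φ(v₁),…,φ(v_{n−1})) for all v₁,…,v_{n−1} ∈ V if and only if b(φ(u), φ(v)) = det(φ)·b(u, v) for all u, v ∈ V. -/
section TopDegreeForms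

variable {R M ι : Type*} [CommRing R] [AddCommGroup M] [Module R M]

lemma alternatingMap_map_comp_eq_det_mul [Finite ι] (e : Module.Basis ι R M)
    (f : M [⋀^ι]→ₗ[R] R) (φ : M →ₗ[R] M) (v : ι → M) : f (φ ∘ v) = LinearMap.det φ * f v := by
  classical
  have := Fintype.ofFinite ι
  rw [f.eq_smul_basis_det e, AlternatingMap.smul_apply, AlternatingMap.smul_apply,
    Module.Basis.det_comp, smul_eq_mul, smul_eq_mul, mul_left_comm]

lemma alternatingMap_map_update_basis [DecidableEq ι] {N : Type*} [AddCommGroup N]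
    [Module R N] (e : Module.Basis ι R M) (f : M [⋀^ι]→ₗ[R] N) (i : ι) (w : M) :
    f (Function.update e i w) = e.repr w i • f e := by
  suffices f.toMultilinearMap.toLinearMap e i = (e.coord i).smulRight (f e) from
    LinearMap.congr_fun this w
  refine e.ext fun j => ?_
  rcases eq_or_ne i j with rfl | hij
  · simp
  · simp [f.map_update_self _ hij, hij.symm]

lemma eq_zero_of_forall_alternatingMap_update_eq_zero [IsDomain R] [Finite ι] [DecidableEq ι]
    (e : Module.Basis ι R M) {f : M [⋀^ι]→ₗ[R] R} (hf : f ≠ 0) (i : ι) {w : M}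
    (hw : ∀ v : ι → M, f (Function.update v i w) = 0) : w = 0 := by
  refine e.ext_elem fun j => ?_
  -- Moving `e j` to position `i` makes the `j`-th coordinate of `w` readable from slot `i`.
  let e' := e.reindex (Equiv.swap j i)
  have hmul : e'.repr w i * f e' = 0 := by rw [← smul_eq_mul, ← alternatingMap_map_update_basis, hw]
  have hcoord : e'.repr w i = 0 :=
    (mul_eq_zero.mp hmul).resolve_right ((f.map_basis_ne_zero_iff e').mpr hf)
  simpa [e'] using hcoord

end TopDegreeForms

section CrossForm

variable {R M : Type*} [CommRing R] [AddCommGroup M] [Module R M] {m : ℕ}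
  {b : LinearMap.BilinForm R M} {X : M [⋀^Fin m]→ₗ[R] M}

/-- Every value `X v` is orthogonal to all the arguments `v i`: the first axiom of a cross product,
with the value of `X` in the left slot of the possibly nonsymmetric form `b`. -/
def HasOrthogonalValues (b : LinearMap.BilinForm R M) (X : M [⋀^Fin m]→ₗ[R] M) : Prop :=
  ∀ (v : Fin m → M) (i : Fin m), b (X v) (v i) = 0

namespace HasOrthogonalValues

/-- The alternating form `(v₁, …, v_m, w) ↦ b (X v) w` attached to an alternating map `X` whose
values are orthogonal to its arguments. The vector paired with `X v` is put in the last position. -/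
def crossForm (hX : HasOrthogonalValues b X) : M [⋀^Fin (m + 1)]→ₗ[R] R where
  toMultilinearMap := MultilinearMap.uncurryRight (M := fun _ : Fin (m + 1) => M)
    (b.compMultilinearMap X.toMultilinearMap)
  map_eq_zero_of_eq' v i j hv hij := by
    change b (X (Fin.init v)) (v (Fin.last m)) = 0
    induction i using Fin.lastCases with
    | last =>
      obtain ⟨j, rfl⟩ := Fin.exists_castSucc_eq.mpr hij.symm
      rw [hv]
      exact hX (Fin.init v) j
    | cast i =>
      induction j using Fin.lastCases with
      | last =>
        rw [← hv]
        exact hX (Fin.init v) i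
      | cast j =>
        rw [X.map_eq_zero_of_eq (Fin.init v) hv (ne_of_apply_ne Fin.castSucc hij), map_zero,
          LinearMap.zero_apply]

lemma crossForm_apply (hX : HasOrthogonalValues b X) (v : Fin (m + 1) → M) :
    hX.crossForm v = b (X (Fin.init v)) (v (Fin.last m)) := rfl

lemma crossForm_snoc (hX : HasOrthogonalValues b X) (v : Fin m → M) (w : M) :
    hX.crossForm (Fin.snoc v w) = b (X v) w := by
  rw [crossForm_apply, Fin.init_snoc, Fin.snoc_last]

lemma crossForm_ne_zero (hX : HasOrthogonalValues b X) (hb : b.SeparatingLeft) (hX₀ : X ≠ 0) :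
    hX.crossForm ≠ 0 := by
  contrapose! hX₀
  ext v
  refine hb _ fun w => ?_
  rw [← hX.crossForm_snoc, hX₀, AlternatingMap.zero_apply]

lemma apply_map_comp_eq_det_mul (hX : HasOrthogonalValues b X)
    (e : Module.Basis (Fin (m + 1)) R M) (φ : M →ₗ[R] M) (v : Fin m → M) (w : M) :
    b (X (φ ∘ v)) (φ w) = LinearMap.det φ * b (X v) w := by
  rw [← hX.crossForm_snoc, ← hX.crossForm_snoc, ← Fin.comp_snoc,
    alternatingMap_map_comp_eq_det_mul e]

lemma orthogonal_span_range_eq_bot [IsDomain R] (hX : HasOrthogonalValues b X)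
    (e : Module.Basis (Fin (m + 1)) R M) (hb : b.SeparatingLeft) (hX₀ : X ≠ 0) :
    b.orthogonal (Submodule.span R (Set.range X)) = ⊥ := by
  refine (Submodule.eq_bot_iff _).mpr fun w hw => ?_
  refine eq_zero_of_forall_alternatingMap_update_eq_zero e (hX.crossForm_ne_zero hb hX₀)
    (Fin.last m) fun v => ?_
  rw [crossForm_apply, Fin.init_update_last, Function.update_self]
  exact hw _ (Submodule.subset_span ⟨Fin.init v, rfl⟩)

lemma map_apply_eq_apply_map_comp (hX : HasOrthogonalValues b X)
    (e : Module.Basis (Fin (m + 1)) R M) (hb : b.SeparatingLeft) {φ : M →ₗ[R] M}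
    (hφ : Function.Surjective φ) (hdet : ∀ u w, b (φ u) (φ w) = LinearMap.det φ * b u w)
    (v : Fin m → M) : φ (X v) = X (φ ∘ v) := by
  refine sub_eq_zero.mp (hb _ fun y => ?_)
  obtain ⟨w, rfl⟩ := hφ y
  rw [map_sub, LinearMap.sub_apply, hdet, hX.apply_map_comp_eq_det_mul e, sub_self]

end HasOrthogonalValues

end CrossForm

section ImageSpan

variable {F V : Type*} [Field F] [AddCommGroup V] [Module F V] {m : ℕ}
  {b : LinearMap.BilinForm F V} {X : V [⋀^Fin m]→ₗ[F] V}

namespace HasOrthogonalValues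

lemma span_range_eq_top (hX : HasOrthogonalValues b X)
    (e : Module.Basis (Fin (m + 1)) F V) (hb : b.Nondegenerate) (hX₀ : X ≠ 0) :
    Submodule.span F (Set.range X) = ⊤ := by
  have := Module.Finite.of_basis e
  have hcodim := LinearMap.BilinForm.finrank_orthogonal hb (Submodule.span F (Set.range X))
  rw [hX.orthogonal_span_range_eq_bot e hb.1 hX₀, finrank_bot] at hcodim
  exact Submodule.eq_top_of_finrank_eq
    ((Submodule.finrank_le _).antisymm (Nat.sub_eq_zero_iff_le.mp hcodim.symm))

lemma apply_map_map_eq_det_mul (hX : HasOrthogonalValues b X)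
    (e : Module.Basis (Fin (m + 1)) F V) (hb : b.Nondegenerate) (hX₀ : X ≠ 0) {φ : V →ₗ[F] V}
    (hφ : ∀ v : Fin m → V, φ (X v) = X (φ ∘ v)) (u w : V) :
    b (φ u) (φ w) = LinearMap.det φ * b u w := by
  suffices (b.flip (φ w)).comp φ = LinearMap.det φ • b.flip w from LinearMap.congr_fun this u
  refine LinearMap.ext_on_range (hX.span_range_eq_top e hb hX₀) fun v => ?_
  change b (φ (X v)) (φ w) = LinearMap.det φ * b (X v) w
  rw [hφ, hX.apply_map_comp_eq_det_mul e]

end HasOrthogonalValues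

end ImageSpan

section NormIdentity

lemma det_gram_of_isOrthoᵢ {R M ι : Type*} [CommRing R] [AddCommGroup M] [Module R M] [Fintype ι]
    [DecidableEq ι] {b : LinearMap.BilinForm R M} {v : ι → M} (hv : b.IsOrthoᵢ v) :
    (Matrix.of fun i j => b (v i) (v j)).det = ∏ i, b (v i) (v i) := by
  rw [← Matrix.det_diagonal]
  congr 1
  ext i j
  rcases eq_or_ne i j with rfl | hij
  · rw [Matrix.of_apply, Matrix.diagonal_apply_eq]
  · rw [Matrix.of_apply, Matrix.diagonal_apply_ne _ hij]
    exact hv hij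

lemma IsCrossProduct.ne_zero {F V : Type*} [Field F] [AddCommGroup V] [Module F V]
    [FiniteDimensional F V] {r : ℕ} {b : LinearMap.BilinForm F V}
    {X : MultilinearMap F (fun _ : Fin r => V) V} (hX : IsCrossProduct b X)
    (h2 : (2 : F) ≠ 0) (hb : b.Nondegenerate) (hsymm : b.IsSymm)
    (hr : r ≤ Module.finrank F V) : X ≠ 0 := by
  rintro rfl
  let : Invertible (2 : F) := invertibleOfNonzero h2
  obtain ⟨e, he⟩ := LinearMap.BilinForm.exists_orthogonal_basis (B := b) ⟨hsymm.eq⟩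
  have hv : b.IsOrthoᵢ (e ∘ Fin.castLE hr) := he.comp_of_injective (Fin.castLE_injective hr)
  have hgram := (hX.2 (e ∘ Fin.castLE hr)).trans (det_gram_of_isOrthoᵢ hv)
  rw [zero_apply, map_zero] at hgram
  exact Finset.prod_ne_zero_iff.mpr
    (fun i _ => he.not_isOrtho_basis_self_of_separatingLeft hb.1 (Fin.castLE hr i)) hgram.symm

end NormIdentity

theorem stmt7_general {F V : Type*} [Field F] [AddCommGroup V] [Module F V] {m : ℕ}
    (hdim : Module.finrank F V = m + 1) {b : LinearMap.BilinForm F V} (hb : b.Nondegenerate)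
    {X : V [⋀^Fin m]→ₗ[F] V} (hX₀ : X ≠ 0) (hX : HasOrthogonalValues b X) (φ : V ≃ₗ[F] V) :
    (∀ v : Fin m → V, φ (X v) = X (fun i => φ (v i))) ↔
      ∀ u w : V, b (φ u) (φ w) = LinearMap.det (φ : V →ₗ[F] V) * b u w := by
  have := Module.finite_of_finrank_eq_succ hdim
  let e := Module.finBasisOfFinrankEq F V hdim
  exact ⟨fun h => hX.apply_map_map_eq_det_mul e hb hX₀ h,
    fun h => hX.map_apply_eq_apply_map_comp e hb.1 φ.surjective h⟩

/-- an invertible linear map `φ` is an automorphism of an alternating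
`(n-1)`-fold cross product `(V, X)` if and only if `b(φu, φv) = det(φ)·b(u,v)` for all
`u, v`. -/
theorem stmt7 (F V : Type*) [Field F] [AddCommGroup V] [Module F V] [FiniteDimensional F V]
    (hchar : (2 : F) ≠ 0)
    (n : ℕ) (hn : 3 ≤ n) (hdim : Module.finrank F V = n)
    (b : LinearMap.BilinForm F V)
    (hbnd : b.Nondegenerate) (hbsymm : ∀ u v : V, b u v = b v u)
    (X : MultilinearMap F (fun _ : Fin (n - 1) => V) V)
    (halt : ∀ (v : Fin (n - 1) → V) (i j : Fin (n - 1)), i ≠ j → v i = v j → X v = 0)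
    (hX : IsCrossProduct b X)
    (φ : V ≃ₗ[F] V) :
    (∀ v : Fin (n - 1) → V, φ (X v) = X (fun i => φ (v i))) ↔
    (∀ u w : V, b (φ u) (φ w) = LinearMap.det (φ : V →ₗ[F] V) * b u w) := by
  exact stmt7_general (X := ⟨X, fun v i j hv hij => halt v i j hij hv⟩) (by omega) hbnd
    (ne_of_apply_ne (·.toMultilinearMap) (hX.ne_zero hchar hbnd ⟨hbsymm⟩ (by omega))) hX.1 φ
end

section
/- Let F be a field of characteristic different from 2, V an F-vector space of dimension n ≥ 3, and X : V^{n−1} → V an alternating (n−1)-fold cross product relative to a nondegenerate symmetric bilinear form b. Then an invertible linear map φ : V → V satisfies both φ(X(v₁,…,v_{n−1})) = X(φ(v₁),…,φ(v_{n−1})) for all v₁,…,v_{n−1} ∈ V and b(φ(u), φ(v)) = b(u, v) for all u, v ∈ V, if and only if φ is an isometry of b with det(φ) = 1 (i.e. φ lies in the special orthogonal group of (V, b)). -/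
/- The expansion `0 = f(a + c, a + c) = f(a, a) + f(a, c) + f(c, a) + f(c, c)`, in the arguments
`i₀` and `i` with `a = v i` and `c = v i₀`, leaves only `f(c, a) = f v`: the others have two equal
arguments of which one is at `i₀`. -/
theorem map_eq_zero_of_forall_eq_basepoint {R M N ι : Type*} [Semiring R]
    [AddCommMonoid M] [Module R M] [AddCommMonoid N] [Module R N]
    (f : MultilinearMap R (fun _ : ι => M) N) {i₀ : ι}
    (hf : ∀ v i, i ≠ i₀ → v i = v i₀ → f v = 0) {v : ι → M} {i j : ι} (hv : v i = v j)
    (hij : i ≠ j) : f v = 0 := by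
  classical
  obtain rfl | hi := eq_or_ne i i₀
  · exact hf v j hij.symm hv.symm
  obtain rfl | hj := eq_or_ne j i₀
  · exact hf v i hi hv
  let g (x y : M) : N := f (Function.update (Function.update v i₀ x) i y)
  have g_self (x : M) : g x x = 0 := hf _ i hi (by simp [hi.symm])
  have g_left (y : M) : g (v i) y = 0 := hf _ j hj (by simp [hi.symm, hj, hij.symm, hv])
  have g_add_left (x x' y : M) : g (x + x') y = g x y + g x' y := by
    simp only [g, Function.update_comm hi.symm, f.map_update_add]
  have g_add_right (x y y' : M) : g x (y + y') = g x y + g x y' := f.map_update_add _ _ _ _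
  calc f v = g (v i₀) (v i) := by simp [g]
    _ = g (v i + v i₀) (v i + v i₀) := by
      rw [g_add_left, g_add_right, g_add_right]
      simp only [g_self, g_left, zero_add, add_zero]
    _ = 0 := g_self _

theorem alternatingMap_comp_eq_det_mul {R M ι : Type*} [CommRing R] [AddCommGroup M] [Module R M]
    [Finite ι] (e : Module.Basis ι R M) (g : M [⋀^ι]→ₗ[R] R) (f : M →ₗ[R] M)
    (v : ι → M) : g (f ∘ v) = LinearMap.det f * g v := by
  classical
  have := Fintype.ofFinite ι
  rw [g.eq_smul_basis_det e]
  simp only [AlternatingMap.smul_apply, e.det_comp, smul_eq_mul, mul_left_comm]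

section Gram

variable {F V : Type*} [Field F] [AddCommGroup V] [Module F V] {b : LinearMap.BilinForm F V}

theorem separatingLeft_restrict_ker (hb : b.SeparatingLeft) {x : V} (hx : b x x ≠ 0) :
    (b.restrict (LinearMap.ker (b x))).SeparatingLeft := by
  rintro ⟨w, hw⟩ hw_perp
  rw [LinearMap.mem_ker] at hw
  have hw_eq : w = (b w x / b x x) • x := by
    refine sub_eq_zero.1 (hb _ fun u => ?_)
    have hu : b x (u - (b x u / b x x) • x) = 0 := by simp [hx]
    have hwu : b w (u - (b x u / b x x) • x) = 0 := hw_perp ⟨_, hu⟩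
    simp only [map_sub, map_smul, smul_eq_mul, LinearMap.sub_apply, LinearMap.smul_apply] at hwu ⊢
    linear_combination hwu
  have hc : b w x / b x x = 0 := by
    rw [hw_eq, map_smul, smul_eq_mul] at hw
    exact (mul_eq_zero.1 hw).resolve_right hx
  simpa [hc] using hw_eq

theorem exists_gram_det_ne_zero {r : ℕ} (hdim : Module.finrank F V = r + 1)
    (hb : b.SeparatingLeft) (hbalt : ¬ b.IsAlt) :
    ∃ v : Fin r → V, (Matrix.of fun i j => b (v i) (v j)).det ≠ 0 := by
  have := FiniteDimensional.of_finrank_eq_succ hdim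
  obtain ⟨x, hx⟩ := not_forall.1 hbalt
  have hbx : b x ≠ 0 := fun h => hx (by simp [h])
  have hker : Module.finrank F (LinearMap.ker (b x)) = r := by
    have := Module.Dual.finrank_ker_add_one_of_ne_zero hbx
    lia
  let e := Module.finBasisOfFinrankEq F (LinearMap.ker (b x)) hker
  have hdet : (LinearMap.BilinForm.toMatrix e (b.restrict _)).det ≠ 0 :=
    Matrix.separatingLeft_iff_det_ne_zero.1
      ((LinearMap.BilinForm.separatingLeft_toMatrix_iff e).2 (separatingLeft_restrict_ker hb hx))
  refine ⟨fun i => e i, ?_⟩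
  convert! hdet
  ext i j
  simp [LinearMap.BilinForm.toMatrix_apply]

theorem not_isAlt_of_two_ne_zero [Nontrivial V] (hchar : (2 : F) ≠ 0) (hb : b.SeparatingLeft)
    (hsymm : LinearMap.IsSymm b) : ¬ b.IsAlt := by
  have := invertibleOfNonzero hchar
  obtain ⟨x, hx⟩ := LinearMap.BilinForm.exists_bilinForm_self_ne_zero hb.ne_zero hsymm
  exact fun h => hx (h x)

end Gram

namespace IsCrossProduct

variable {F V : Type*} [Field F] [AddCommGroup V] [Module F V] {r : ℕ}
  {b : LinearMap.BilinForm F V} {X : MultilinearMap F (fun _ : Fin r => V) V}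

/-- The alternating form `(v₁, …, vᵣ, w) ↦ b(X(v₁, …, vᵣ), w)` of an `r`-fold cross product `X`,
a volume form on `V` when `dim V = r + 1` and it is nonzero. -/
def volumeForm (hX : IsCrossProduct b X) : V [⋀^Fin (r + 1)]→ₗ[F] F where
  toMultilinearMap := (b.compMultilinearMap X).uncurryRight (M := fun _ => V)
  map_eq_zero_of_eq' _ _ _ := by
    refine map_eq_zero_of_forall_eq_basepoint _ (i₀ := Fin.last r) fun v i hi hv => ?_
    obtain ⟨k, rfl⟩ := Fin.exists_castSucc_eq.2 hi
    change b (X (Fin.init v)) (v (Fin.last r)) = 0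
    rw [← hv]
    exact hX.1 (Fin.init v) k

theorem volumeForm_snoc (hX : IsCrossProduct b X) (v : Fin r → V) (w : V) :
    hX.volumeForm (Fin.snoc (α := fun _ => V) v w) = b (X v) w := by
  simp [volumeForm]

theorem apply_map_eq_det_mul (hX : IsCrossProduct b X) (hdim : Module.finrank F V = r + 1)
    (f : V →ₗ[F] V) (v : Fin r → V) (w : V) :
    b (X fun i => f (v i)) (f w) = LinearMap.det f * b (X v) w := by
  have := FiniteDimensional.of_finrank_eq_succ hdim
  have h := alternatingMap_comp_eq_det_mul (Module.finBasisOfFinrankEq F V hdim) hX.volumeForm f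
    (Fin.snoc (α := fun _ => V) v w)
  rwa [Fin.comp_snoc, volumeForm_snoc, volumeForm_snoc] at h

theorem exists_apply_ne_zero (hX : IsCrossProduct b X) (hdim : Module.finrank F V = r + 1)
    (hb : b.SeparatingLeft) (hbalt : ¬ b.IsAlt) : ∃ v, X v ≠ 0 := by
  obtain ⟨v, hv⟩ := exists_gram_det_ne_zero hdim hb hbalt
  refine ⟨v, fun h => hv ?_⟩
  rw [← hX.2 v, h, map_zero]

end IsCrossProduct

theorem stmt8_general {F V : Type*} [Field F] [AddCommGroup V] [Module F V] {r : ℕ}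
    (hdim : Module.finrank F V = r + 1) {b : LinearMap.BilinForm F V} (hb : b.SeparatingLeft)
    (hbalt : ¬ b.IsAlt) {X : MultilinearMap F (fun _ : Fin r => V) V} (hX : IsCrossProduct b X)
    {f : V →ₗ[F] V} (hf : ∀ u w, b (f u) (f w) = b u w) :
    (∀ v, f (X v) = X fun i => f (v i)) ↔ LinearMap.det f = 1 := by
  have := FiniteDimensional.of_finrank_eq_succ hdim
  constructor
  · intro hfX
    obtain ⟨v, hv⟩ := hX.exists_apply_ne_zero hdim hb hbalt
    obtain ⟨w, hw⟩ : ∃ w, b (X v) w ≠ 0 := not_forall.1 fun h => hv (hb _ h)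
    have hdet := hX.apply_map_eq_det_mul hdim f v w
    rw [← hfX, hf] at hdet
    exact (mul_eq_right₀ hw).1 hdet.symm
  · intro hdet v
    have hsurj : Function.Surjective f :=
      ((Module.End.isUnit_iff f).1 (f.isUnit_iff_isUnit_det.2 (hdet ▸ isUnit_one))).surjective
    refine sub_eq_zero.1 (hb _ (hsurj.forall.2 fun w => ?_))
    rw [map_sub, LinearMap.sub_apply, hf, hX.apply_map_eq_det_mul hdim, hdet, one_mul, sub_self]

/-- an invertible linear map `φ` is an automorphism of an alternating
`(n-1)`-fold cross product `(V, X)` preserving `b` if and only if `φ` is an isometry of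
`b` with `det φ = 1`. -/
theorem stmt8 (F V : Type*) [Field F] [AddCommGroup V] [Module F V] [FiniteDimensional F V]
    (hchar : (2 : F) ≠ 0)
    (n : ℕ) (hn : 3 ≤ n) (hdim : Module.finrank F V = n)
    (b : LinearMap.BilinForm F V)
    (hbnd : b.Nondegenerate) (hbsymm : ∀ u v : V, b u v = b v u)
    (X : MultilinearMap F (fun _ : Fin (n - 1) => V) V)
    (halt : ∀ (v : Fin (n - 1) → V) (i j : Fin (n - 1)), i ≠ j → v i = v j → X v = 0)
    (hX : IsCrossProduct b X)
    (φ : V ≃ₗ[F] V) :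
    ((∀ v : Fin (n - 1) → V, φ (X v) = X (fun i => φ (v i))) ∧
      (∀ u w : V, b (φ u) (φ w) = b u w)) ↔
    ((∀ u w : V, b (φ u) (φ w) = b u w) ∧ LinearMap.det (φ : V →ₗ[F] V) = 1) := by
  obtain ⟨r, rfl⟩ : ∃ r, n = r + 1 := ⟨n - 1, by lia⟩
  have : Nontrivial V := Module.nontrivial_of_finrank_eq_succ hdim
  exact and_comm.trans (and_congr_right (stmt8_general hdim hbnd.1
    (not_isAlt_of_two_ne_zero hchar hbnd.1 ⟨hbsymm⟩) hX (f := φ)))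
end

section
/- Let F be an algebraically closed field of characteristic different from 2, V an F-vector space of dimension n ≥ 3, and b a nondegenerate symmetric bilinear form on V. Then for every r ∈ F with r^{n−2} = 1 there exists an invertible linear map φ : V → V with det(φ) = r and b(φ(u), φ(v)) = r·b(u, v) for all u, v ∈ V. -/
/-!
Write `r = s ^ 2`. Scaling by `s` multiplies `b` by `r` and has determinant `s ^ n`, whose square
is `r ^ n = r ^ 2`; so `s ^ n = r` or `s ^ n = -r`. In the second case, precompose with a reflection
preserving `b`, which has determinant `-1`.
-/

open Module

section Reflection

variable {R M : Type*} [CommRing R] [AddCommGroup M] [Module R M] [Module.Free R M]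
  [Module.Finite R M]

theorem det_preReflection (x : M) (f : Dual R M) :
    LinearMap.det (preReflection x f) = 1 - f x := by
  have h_transvection : preReflection x f = LinearMap.transvection (-f) x := by
    ext y
    simp [preReflection_apply, LinearMap.transvection.apply, sub_eq_add_neg]
  rw [h_transvection, LinearMap.transvection.det, LinearMap.neg_apply, sub_eq_add_neg]

theorem det_reflection {x : M} {f : Dual R M} (h : f x = 2) :
    LinearMap.det (reflection h : M →ₗ[R] M) = -1 := by
  calc
    LinearMap.det (reflection h : M →ₗ[R] M) = 1 - f x := det_preReflection x f
    _ = -1 := by rw [h]; norm_num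

end Reflection

section BilinForm

variable {F V : Type*} [Field F] [AddCommGroup V] [Module F V] {b : LinearMap.BilinForm F V}

theorem exists_isOrthogonal_reflection [Nontrivial V] (hb : b.IsSymm) :
    ∃ (x : V) (f : Dual F V) (h : f x = 2), b.IsOrthogonal (reflection h) := by
  have hb_symm : LinearMap.IsSymm b := LinearMap.BilinForm.isSymm_iff.mp hb
  by_cases h_two : (2 : F) = 0
  · -- In characteristic 2 the identity is the reflection with `x = 0` and `f = 0`.
    exact ⟨0, 0, by simp [h_two], fun u v => by simp [reflection_apply]⟩
  by_cases hb_zero : b = 0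
  · obtain ⟨x, hx⟩ := exists_ne (0 : V)
    obtain ⟨f, hf⟩ := Projective.exists_dual_eq_one F hx
    exact ⟨x, (2 : F) • f, by simp [hf], fun u v => by simp [hb_zero]⟩
  · have : Invertible (2 : F) := invertibleOfNonzero h_two
    obtain ⟨x, hx⟩ := LinearMap.BilinForm.exists_bilinForm_self_ne_zero hb_zero hb_symm
    have hx_reflective : b.IsReflective x :=
      ⟨.of_ne_zero hx, fun y => (Ne.isUnit hx).dvd⟩
    exact ⟨x, hx_reflective.coroot, hx_reflective.coroot_apply_self,
      hx_reflective.isOrthogonal_reflection b hb_symm⟩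

theorem exists_isOrthogonal_det_eq_neg_one [FiniteDimensional F V] [Nontrivial V]
    (hb : b.IsSymm) :
    ∃ σ : V ≃ₗ[F] V, LinearMap.det (σ : V →ₗ[F] V) = -1 ∧ b.IsOrthogonal σ := by
  obtain ⟨x, f, h, h_orthogonal⟩ := exists_isOrthogonal_reflection hb
  exact ⟨reflection h, det_reflection h, h_orthogonal⟩

theorem exists_similitude_det_eq [FiniteDimensional F V] [Nontrivial V] (hb : b.IsSymm)
    {r d : F} (hr : IsSquare r) (hr_ne : r ≠ 0) (hd : d ^ 2 = r ^ finrank F V) :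
    ∃ φ : V ≃ₗ[F] V,
      LinearMap.det (φ : V →ₗ[F] V) = d ∧ ∀ u v, b (φ u) (φ v) = r * b u v := by
  obtain ⟨s, rfl⟩ := (isSquare_iff_exists_sq r).mp hr
  have hs : s ≠ 0 := ne_zero_pow two_ne_zero hr_ne
  have h_sq : d ^ 2 = (s ^ finrank F V) ^ 2 := by rw [hd, pow_right_comm]
  suffices ∃ σ : V ≃ₗ[F] V,
      s ^ finrank F V * LinearMap.det (σ : V →ₗ[F] V) = d ∧ b.IsOrthogonal σ by
    obtain ⟨σ, rfl, hσ⟩ := this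
    exact ⟨σ.trans (LinearEquiv.smulOfNeZero F V s hs), LinearMap.det_smul s (σ : V →ₗ[F] V),
      fun u v => by simp [hσ u v, pow_two, mul_assoc]⟩
  rcases sq_eq_sq_iff_eq_or_eq_neg.mp h_sq with rfl | rfl
  · exact ⟨.refl F V, by simp, fun _ _ => rfl⟩
  · obtain ⟨σ, h_det, hσ⟩ := exists_isOrthogonal_det_eq_neg_one hb
    exact ⟨σ, by rw [h_det, mul_neg_one], hσ⟩

theorem stmt10_general (hdim : 2 ≤ finrank F V) (hb : b.IsSymm) {r : F} (hr_sq : IsSquare r)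
    (hr_ne : r ≠ 0) (hr : r ^ (finrank F V - 2) = 1) :
    ∃ φ : V ≃ₗ[F] V,
      LinearMap.det (φ : V →ₗ[F] V) = r ∧ ∀ u v, b (φ u) (φ v) = r * b u v := by
  have : FiniteDimensional F V := .of_finrank_pos (by lia)
  have : Nontrivial V := nontrivial_of_finrank_pos (R := F) (by lia)
  have h_pow : r ^ 2 = r ^ finrank F V := by rw [← pow_sub_mul_pow r hdim, hr, one_mul]
  exact exists_similitude_det_eq hb hr_sq hr_ne h_pow

end BilinForm

/-- over an algebraically closed field, for every `(n-2)`-th root of unity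
`r` there is an invertible linear map `φ` with `det φ = r` and
`b(φu, φv) = r·b(u,v)` for all `u, v`. -/
theorem stmt10 (F V : Type*) [Field F] [IsAlgClosed F] [AddCommGroup V] [Module F V]
    [FiniteDimensional F V]
    (hchar : (2 : F) ≠ 0)
    (n : ℕ) (hn : 3 ≤ n) (hdim : Module.finrank F V = n)
    (b : LinearMap.BilinForm F V)
    (hbnd : b.Nondegenerate) (hbsymm : ∀ u v : V, b u v = b v u)
    (r : F) (hr : r ^ (n - 2) = 1) :
    ∃ φ : V ≃ₗ[F] V,
      LinearMap.det (φ : V →ₗ[F] V) = r ∧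
      ∀ u v : V, b (φ u) (φ v) = r * b u v := by
  subst hdim
  exact stmt10_general (by lia) ⟨hbsymm⟩ (IsAlgClosed.exists_eq_mul_self r)
    (IsUnit.of_pow_eq_one hr (by lia)).ne_zero hr
end

section
/- Let X be a 1-fold cross product on V relative to b, and define h : V × V → End_F(V) by h(u, v) = b(u, v)·id_V − b(X(u), v)·X. Then: (1) h(X(u), v) = X ∘ h(u, v) for all u, v ∈ V; (2) h(v, u) = b(u, v)·id_V + b(X(u), v)·X for all u, v ∈ V (so h is hermitian with respect to the involution α·id + β·X ↦ α·id − β·X); and (3) an invertible linear map φ : V → V satisfies h(φ(u), φ(v)) = h(u, v) for all u, v ∈ V if and only if φ ∘ X = X ∘ φ and b(φ(u), φ(v)) = b(u, v) for all u, v ∈ V. -/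
/-!
Polarization makes `b (X u) v` skew-symmetric and `X` an isometry of `b`, so `X ∘ X = -id` by
nondegeneracy; sesquilinearity and hermitian symmetry of `h` follow. Since
`b (h(u, v) w) w = b u v * b w w`, evaluation at an anisotropic vector `w` recovers `b` from `h`.
A surjection preserving `h` therefore preserves `b`, and it commutes with `X` because
`h(φ (X u), φ v) = h(X u, v) = X ∘ h(u, v) = X ∘ h(φ u, φ v) = h(X (φ u), φ v)`.
-/

/-- A 1-fold cross product on `V` relative to `b`, viewed as a linear endomorphism. -/
def IsOneFoldCrossProduct {F V : Type*} [Field F] [AddCommGroup V] [Module F V]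
    (b : LinearMap.BilinForm F V) (X : V →ₗ[F] V) : Prop :=
  (∀ v : V, b (X v) v = 0) ∧ (∀ v : V, b (X v) (X v) = b v v)

/-- The hermitian form `h(u,v) = b(u,v)·id − b(X(u),v)·X` with values in `End_F(V)`
(in fact in the étale subalgebra `F·id ⊕ F·X`). -/
noncomputable def hermForm {F V : Type*} [Field F] [AddCommGroup V] [Module F V]
    (b : LinearMap.BilinForm F V) (X : V →ₗ[F] V) (u v : V) : V →ₗ[F] V :=
  b u v • LinearMap.id - b (X u) v • X

section CrossProduct

variable {F V : Type*} [Field F] [AddCommGroup V] [Module F V]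
  {b : LinearMap.BilinForm F V} {X : V →ₗ[F] V}

namespace IsOneFoldCrossProduct

lemma isAlt_compLeft (hX : IsOneFoldCrossProduct b X) : (b.compLeft X).IsAlt :=
  hX.1

lemma comp_eq [Invertible (2 : F)] (hb : b.IsSymm) (hX : IsOneFoldCrossProduct b X) :
    b.comp X X = b :=
  LinearMap.BilinForm.ext_of_isSymm ⟨fun u v => hb.eq (X u) (X v)⟩ hb hX.2

lemma apply_apply_eq_neg [Invertible (2 : F)] (hbnd : b.Nondegenerate) (hb : b.IsSymm)
    (hX : IsOneFoldCrossProduct b X) (u : V) : X (X u) = -u := by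
  apply LinearMap.ker_eq_bot.mp hbnd.ker_eq_bot
  ext v
  calc b (X (X u)) v = -b (X v) (X u) := (hX.isAlt_compLeft.neg_eq v (X u)).symm
    _ = -b v u := congrArg Neg.neg (LinearMap.congr_fun₂ (hX.comp_eq hb) v u)
    _ = b (-u) v := by rw [hb.eq, map_neg, LinearMap.neg_apply]

end IsOneFoldCrossProduct

lemma hermForm_apply_left (hXX : ∀ w, X (X w) = -w) (u v : V) :
    hermForm b X (X u) v = X ∘ₗ hermForm b X u v := by
  ext w
  simp only [hermForm, hXX, map_neg, LinearMap.neg_apply, LinearMap.sub_apply,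
    LinearMap.smul_apply, LinearMap.id_apply, LinearMap.comp_apply, map_sub, map_smul]
  module

lemma hermForm_swap (hb : b.IsSymm) (hX : (b.compLeft X).IsAlt) (u v : V) :
    hermForm b X v u = b u v • LinearMap.id + b (X u) v • X := by
  have hskew : b (X v) u = -b (X u) v := (hX.neg_eq u v).symm
  rw [hermForm, hskew, hb.eq v u, neg_smul, sub_neg_eq_add]

lemma bilin_hermForm_apply_self (hX : (b.compLeft X).IsAlt) (u v w : V) :
    b (hermForm b X u v w) w = b u v * b w w := by
  have hw : b (X w) w = 0 := hX w
  simp [hermForm, hw]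

lemma bilin_eq_of_hermForm_eq [Invertible (2 : F)] (hb : b.IsSymm) (hX : (b.compLeft X).IsAlt)
    {u v x y : V} (h : hermForm b X u v = hermForm b X x y) : b u v = b x y := by
  obtain rfl | hb0 := eq_or_ne b 0
  · rfl
  obtain ⟨w, hw⟩ := LinearMap.BilinForm.exists_bilinForm_self_ne_zero hb0 ⟨hb.eq⟩
  apply mul_right_cancel₀ hw
  rw [← bilin_hermForm_apply_self hX, h, bilin_hermForm_apply_self hX]

lemma hermForm_map_map {φ : V → V} (hcomm : ∀ w, φ (X w) = X (φ w))
    (hiso : ∀ u v, b (φ u) (φ v) = b u v) (u v : V) :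
    hermForm b X (φ u) (φ v) = hermForm b X u v := by
  rw [hermForm, hermForm, hiso, ← hcomm, hiso]

lemma map_comm_of_hermForm_map_map [Invertible (2 : F)] (hbnd : b.Nondegenerate)
    (hb : b.IsSymm) (hX : IsOneFoldCrossProduct b X) {φ : V → V} (hφ : Function.Surjective φ)
    (h : ∀ u v, hermForm b X (φ u) (φ v) = hermForm b X u v) (u : V) :
    φ (X u) = X (φ u) := by
  have hXX := hX.apply_apply_eq_neg hbnd hb
  have hh (v : V) : hermForm b X (φ (X u)) (φ v) = hermForm b X (X (φ u)) (φ v) := by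
    rw [h, hermForm_apply_left hXX, hermForm_apply_left hXX, h]
  apply LinearMap.ker_eq_bot.mp hbnd.ker_eq_bot
  refine LinearMap.ext (hφ.forall.mpr fun v => ?_)
  exact bilin_eq_of_hermForm_eq hb hX.isAlt_compLeft (hh v)

end CrossProduct

theorem stmt12_general {F V : Type*} [Field F] [AddCommGroup V] [Module F V]
    (hchar : (2 : F) ≠ 0) {b : LinearMap.BilinForm F V} (hbnd : b.Nondegenerate)
    (hbsymm : ∀ u v : V, b u v = b v u) {X : V →ₗ[F] V} (hX : IsOneFoldCrossProduct b X) :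
    (∀ u v : V, hermForm b X (X u) v = X ∘ₗ hermForm b X u v) ∧
    (∀ u v : V, hermForm b X v u = b u v • LinearMap.id + b (X u) v • X) ∧
    (∀ φ : V → V, Function.Surjective φ →
      ((∀ u v : V, hermForm b X (φ u) (φ v) = hermForm b X u v) ↔
      ((∀ w : V, φ (X w) = X (φ w)) ∧ ∀ u v : V, b (φ u) (φ v) = b u v))) := by
  have : Invertible (2 : F) := invertibleOfNonzero hchar
  have hb : b.IsSymm := ⟨hbsymm⟩
  have hXalt := hX.isAlt_compLeft
  refine ⟨hermForm_apply_left (hX.apply_apply_eq_neg hbnd hb), hermForm_swap hb hXalt,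
    fun φ hφ => ⟨fun h => ⟨?_, ?_⟩, fun ⟨hcomm, hiso⟩ => hermForm_map_map hcomm hiso⟩⟩
  · exact map_comm_of_hermForm_map_map hbnd hb hX hφ h
  · exact fun u v => bilin_eq_of_hermForm_eq hb hXalt (h u v)

/-- the form `h(u,v) = b(u,v)·id − b(X(u),v)·X` is `X`-sesquilinear and
hermitian, and an invertible linear map preserves `h` iff it commutes with `X` and is an
isometry of `b`. -/
theorem stmt12 (F V : Type*) [Field F] [AddCommGroup V] [Module F V] [FiniteDimensional F V]
    (hchar : (2 : F) ≠ 0)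
    (b : LinearMap.BilinForm F V)
    (hbnd : b.Nondegenerate) (hbsymm : ∀ u v : V, b u v = b v u)
    (X : V →ₗ[F] V) (hX : IsOneFoldCrossProduct b X) :
    (∀ u v : V, hermForm b X (X u) v = X ∘ₗ hermForm b X u v) ∧
    (∀ u v : V, hermForm b X v u = b u v • LinearMap.id + b (X u) v • X) ∧
    (∀ φ : V ≃ₗ[F] V,
      (∀ u v : V, hermForm b X (φ u) (φ v) = hermForm b X u v) ↔
      ((∀ w : V, φ (X w) = X (φ w)) ∧ ∀ u v : V, b (φ u) (φ v) = b u v)) := by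
  obtain ⟨hsesq, hherm, hiff⟩ := stmt12_general hchar hbnd hbsymm hX
  exact ⟨hsesq, hherm, fun φ => hiff φ φ.surjective⟩
end

section
/- Let F be a field of characteristic different from 2 containing an element i with i² = −1, and let X be a 1-fold cross product on V relative to b. Set V₊ = {v ∈ V : X(v) = i·v} and V₋ = {v ∈ V : X(v) = −i·v}, and let Aut(V, X) = {φ ∈ GL(V) : φ ∘ X = X ∘ φ}. Then: (1) every φ ∈ Aut(V, X) preserves V₊ and V₋, and the map φ ↦ (φ|_{V₊}, φ|_{V₋}) is a group isomorphism Aut(V, X) ≅ GL(V₊) × GL(V₋); (2) the map φ ↦ φ|_{V₊} is a group isomorphism from {φ ∈ Aut(V, X) : b(φ(u), φ(v)) = b(u, v) for all u, v ∈ V} onto GL(V₊). -/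
/-!
Polarising the axioms of a 1-fold cross product makes `X` skew-adjoint and orthogonal for `b`, so
`X ^ 2 = -1`, and since `2` is invertible the space is the direct sum of the `±i`-eigenspaces. An
automorphism commutes with `X` exactly when it is block diagonal for this decomposition. Skewness
makes both eigenspaces totally isotropic, so `b` restricts to a perfect pairing of one with the
other, and a block diagonal map is an isometry exactly when its second block is contragredient to
its first.
-/

open Module Function

section Restriction

variable {R M : Type*} [Semiring R] [AddCommMonoid M] [Module R M]

/-- Restriction to a submodule `p` of the automorphisms in a group `H` preserving `p`, as a
homomorphism from `H` to `GL(p)`. -/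
def restrictHom (H : Subgroup (M ≃ₗ[R] M)) (p : Submodule R M) (hp : ∀ φ ∈ H, ∀ x ∈ p, φ x ∈ p) :
    H →* (p ≃ₗ[R] p) :=
  MonoidHom.mk'
    (fun φ => LinearEquiv.ofLinearMap
      ((φ : M ≃ₗ[R] M).toLinearMap.restrict (hp φ φ.2))
      ((φ⁻¹ : M ≃ₗ[R] M).toLinearMap.restrict (hp _ (H.inv_mem φ.2)))
      (LinearMap.ext fun x => Subtype.ext ((φ : M ≃ₗ[R] M).apply_symm_apply x))
      (LinearMap.ext fun x => Subtype.ext ((φ : M ≃ₗ[R] M).symm_apply_apply x)))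
    fun _ _ => rfl

@[simp]
theorem coe_restrictHom_apply {H : Subgroup (M ≃ₗ[R] M)} {p : Submodule R M}
    (hp : ∀ φ ∈ H, ∀ x ∈ p, φ x ∈ p) (φ : H) (x : p) :
    (restrictHom H p hp φ x : M) = (φ : M ≃ₗ[R] M) x :=
  rfl

theorem restrictHom_prod_injective {H : Subgroup (M ≃ₗ[R] M)} {p q : Submodule R M}
    (hpq : Codisjoint p q) (hp : ∀ φ ∈ H, ∀ x ∈ p, φ x ∈ p) (hq : ∀ φ ∈ H, ∀ x ∈ q, φ x ∈ q) :
    Injective ((restrictHom H p hp).prod (restrictHom H q hq)) := by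
  intro φ ψ h
  obtain ⟨h₁, h₂⟩ := Prod.ext_iff.mp h
  ext v
  obtain ⟨x, y, hx, hy, rfl⟩ := Submodule.codisjoint_iff_exists_add_eq.mp hpq v
  have hφx : (φ : M ≃ₗ[R] M) x = (ψ : M ≃ₗ[R] M) x :=
    congrArg Subtype.val (LinearEquiv.congr_fun h₁ ⟨x, hx⟩)
  have hφy : (φ : M ≃ₗ[R] M) y = (ψ : M ≃ₗ[R] M) y :=
    congrArg Subtype.val (LinearEquiv.congr_fun h₂ ⟨y, hy⟩)
  rw [map_add, map_add, hφx, hφy]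

end Restriction

section BlockDiagonal

variable {R M : Type*} [Ring R] [AddCommGroup M] [Module R M] {p q : Submodule R M}

/-- The automorphism `g ⊕ h` of the internal direct sum of `p` and `q`. -/
noncomputable def blockDiagonal (hpq : IsCompl p q) (g : p ≃ₗ[R] p) (h : q ≃ₗ[R] q) :
    M ≃ₗ[R] M :=
  (p.prodEquivOfIsCompl q hpq).symm ≪≫ₗ g.prodCongr h ≪≫ₗ p.prodEquivOfIsCompl q hpq

@[simp]
theorem blockDiagonal_apply_left (hpq : IsCompl p q) (g : p ≃ₗ[R] p) (h : q ≃ₗ[R] q) (x : p) :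
    blockDiagonal hpq g h x = g x := by
  simp [blockDiagonal]

@[simp]
theorem blockDiagonal_apply_right (hpq : IsCompl p q) (g : p ≃ₗ[R] p) (h : q ≃ₗ[R] q) (y : q) :
    blockDiagonal hpq g h y = h y := by
  simp [blockDiagonal]

theorem restrictHom_prod_bijective {H : Subgroup (M ≃ₗ[R] M)} (hpq : IsCompl p q)
    (hp : ∀ φ ∈ H, ∀ x ∈ p, φ x ∈ p) (hq : ∀ φ ∈ H, ∀ x ∈ q, φ x ∈ q)
    (hH : ∀ g h, blockDiagonal hpq g h ∈ H) :
    Bijective ((restrictHom H p hp).prod (restrictHom H q hq)) := by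
  refine ⟨restrictHom_prod_injective hpq.codisjoint hp hq, fun ⟨g, h⟩ => ?_⟩
  refine ⟨⟨blockDiagonal hpq g h, hH g h⟩, Prod.ext ?_ ?_⟩
  · ext x
    exact blockDiagonal_apply_left hpq g h x
  · ext y
    exact blockDiagonal_apply_right hpq g h y

end BlockDiagonal

section Eigenspace

variable {R M : Type*} [CommRing R] [AddCommGroup M] [Module R M] {f : End R M} {μ ν : R}

open Polynomial in
theorem isCompl_eigenspace_of_isUnit_sub (hμν : IsUnit (μ - ν))
    (hf : (f - algebraMap R (End R M) μ) * (f - algebraMap R (End R M) ν) = 0) :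
    IsCompl (f.eigenspace μ) (f.eigenspace ν) := by
  have hcoprime := isCoprime_X_sub_C_of_isUnit_sub hμν
  have hker (c : R) : f.eigenspace c = (aeval f (X - C c)).ker := by
    rw [End.eigenspace_def, map_sub, aeval_X, aeval_C, Algebra.algebraMap_eq_smul_one]
  rw [hker, hker]
  refine ⟨disjoint_ker_aeval_of_isCoprime f hcoprime, codisjoint_iff.mpr ?_⟩
  rw [sup_ker_aeval_eq_ker_aeval_mul_of_coprime f hcoprime, LinearMap.ker_eq_top]
  simpa only [map_mul, map_sub, aeval_X, aeval_C] using hf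

theorem apply_mem_eigenspace_of_commute {φ : M ≃ₗ[R] M} (hφ : ∀ v, φ (f v) = f (φ v)) {x : M}
    (hx : x ∈ f.eigenspace μ) : φ x ∈ f.eigenspace μ :=
  End.mapsTo_genEigenspace_of_comm (g := φ.toLinearMap) (LinearMap.ext fun v => (hφ v).symm) μ 1 hx

theorem blockDiagonal_eigenspace_apply_comm (hμν : IsCompl (f.eigenspace μ) (f.eigenspace ν))
    (g : f.eigenspace μ ≃ₗ[R] f.eigenspace μ) (h : f.eigenspace ν ≃ₗ[R] f.eigenspace ν) (v : M) :
    blockDiagonal hμν g h (f v) = f (blockDiagonal hμν g h v) := by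
  have hf {c : R} (x : f.eigenspace c) : f x = c • (x : M) := End.mem_eigenspace_iff.mp x.2
  obtain ⟨x, y, hx, hy, rfl⟩ := Submodule.codisjoint_iff_exists_add_eq.mp hμν.codisjoint v
  lift x to f.eigenspace μ using hx
  lift y to f.eigenspace ν using hy
  simp only [map_add, map_smul, hf, blockDiagonal_apply_left, blockDiagonal_apply_right]

end Eigenspace

section Contragredient

variable {R M N : Type*} [CommRing R] [AddCommGroup M] [Module R M] [AddCommGroup N] [Module R N]

/-- The automorphism of `N` contragredient to `g ∈ GL(M)` under a perfect pairing of `M` and `N`. -/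
noncomputable def contragredient (P : M →ₗ[R] N →ₗ[R] R) [P.IsPerfPair] (g : M ≃ₗ[R] M) :
    N ≃ₗ[R] N :=
  P.flip.toPerfPair ≪≫ₗ g.symm.dualMap ≪≫ₗ P.flip.toPerfPair.symm

theorem forall_apply_apply_eq_iff_eq_contragredient (P : M →ₗ[R] N →ₗ[R] R) [P.IsPerfPair]
    (g : M ≃ₗ[R] M) (h : N ≃ₗ[R] N) : (∀ x y, P (g x) (h y) = P x y) ↔ h = contragredient P g := by
  have key (x : M) (y : N) : P (g x) (contragredient P g y) = P x y := by
    simp [contragredient]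
  refine ⟨fun hgh => LinearEquiv.ext fun y => P.flip.toPerfPair.injective ?_, ?_⟩
  · ext x
    obtain ⟨x, rfl⟩ := g.surjective x
    exact (hgh x y).trans (key x y).symm
  · rintro rfl
    exact key

end Contragredient

section Polarization

variable {R M : Type*} [CommRing R] [AddCommGroup M] [Module R M] {b : LinearMap.BilinForm R M}
  {p q : Submodule R M}

/-- A polarization of the bilinear form `b`: a direct sum decomposition of the module into two
totally isotropic submodules. -/
structure IsPolarization (b : LinearMap.BilinForm R M) (p q : Submodule R M) : Prop where
  isCompl : IsCompl p q
  isotropic_left : ∀ x ∈ p, ∀ y ∈ p, b x y = 0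
  isotropic_right : ∀ x ∈ q, ∀ y ∈ q, b x y = 0

namespace IsPolarization

theorem flip (h : IsPolarization b p q) : IsPolarization (LinearMap.flip b) q p where
  isCompl := h.isCompl.symm
  isotropic_left x hx y hy := h.isotropic_right y hy x hx
  isotropic_right x hx y hy := h.isotropic_left y hy x hx

theorem bijective_domRestrict₁₂ [b.IsPerfPair] (h : IsPolarization b p q) :
    Bijective (b.domRestrict₁₂ p q) := by
  constructor
  · refine (injective_iff_map_eq_zero _).mpr fun x hx => Subtype.ext ?_
    refine (map_eq_zero_iff b.toPerfPair b.toPerfPair.injective).mp (LinearMap.ext fun v => ?_)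
    obtain ⟨u, w, hu, hw, rfl⟩ := Submodule.codisjoint_iff_exists_add_eq.mp h.isCompl.codisjoint v
    have hxw : b x w = 0 := LinearMap.congr_fun hx ⟨w, hw⟩
    simp [h.isotropic_left x x.2 u hu, hxw]
  · intro f
    obtain ⟨v, hv⟩ := b.toPerfPair.surjective (f ∘ₗ q.projectionOnto p h.isCompl.symm)
    obtain ⟨x, y, hx, hy, rfl⟩ := Submodule.codisjoint_iff_exists_add_eq.mp h.isCompl.codisjoint v
    refine ⟨⟨x, hx⟩, LinearMap.ext fun w => ?_⟩
    have hxw : b (x + y) w = f w := by simpa using LinearMap.congr_fun hv w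
    rwa [map_add, LinearMap.add_apply, h.isotropic_right y hy w w.2, add_zero] at hxw

theorem isPerfPair_domRestrict₁₂ [b.IsPerfPair] (h : IsPolarization b p q) :
    (b.domRestrict₁₂ p q).IsPerfPair where
  bijective_left := h.bijective_domRestrict₁₂
  bijective_right := h.flip.bijective_domRestrict₁₂

theorem isOrthogonal_blockDiagonal (h : IsPolarization b p q) (hb : b.IsSymm)
    {g : p ≃ₗ[R] p} {k : q ≃ₗ[R] q} (hgk : ∀ x y, b (g x) (k y) = b x y) :
    b.IsOrthogonal (blockDiagonal h.isCompl g k) := by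
  have hkg (x : p) (y : q) : b (k y) (g x) = b y x := by
    rw [hb.eq, hgk, hb.eq]
  intro u v
  obtain ⟨x, y, hx, hy, rfl⟩ := Submodule.codisjoint_iff_exists_add_eq.mp h.isCompl.codisjoint u
  obtain ⟨z, w, hz, hw, rfl⟩ := Submodule.codisjoint_iff_exists_add_eq.mp h.isCompl.codisjoint v
  lift x to p using hx
  lift y to q using hy
  lift z to p using hz
  lift w to q using hw
  have hp (x y : p) : b x y = 0 := h.isotropic_left x x.2 y y.2
  have hq (x y : q) : b x y = 0 := h.isotropic_right x x.2 y y.2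
  simp only [map_add, LinearMap.add_apply, blockDiagonal_apply_left, blockDiagonal_apply_right,
    hgk, hkg, hp, hq]

theorem restrictHom_bijective [b.IsPerfPair] (h : IsPolarization b p q) (hb : b.IsSymm)
    {H : Subgroup (M ≃ₗ[R] M)} (hp : ∀ φ ∈ H, ∀ x ∈ p, φ x ∈ p)
    (hq : ∀ φ ∈ H, ∀ x ∈ q, φ x ∈ q) (hH : ∀ φ ∈ H, b.IsOrthogonal φ)
    (hblock : ∀ g k, b.IsOrthogonal (blockDiagonal h.isCompl g k) →
      blockDiagonal h.isCompl g k ∈ H) :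
    Bijective (restrictHom H p hp) := by
  have := h.isPerfPair_domRestrict₁₂
  have hcontra (φ : H) : restrictHom H q hq φ =
      contragredient (b.domRestrict₁₂ p q) (restrictHom H p hp φ) :=
    (forall_apply_apply_eq_iff_eq_contragredient _ _ _).mp fun x y => hH φ φ.2 x y
  constructor
  · intro φ ψ hφψ
    refine restrictHom_prod_injective h.isCompl.codisjoint hp hq (Prod.ext hφψ ?_)
    simp only [MonoidHom.prod_apply, hcontra, hφψ]
  · intro g
    have hg := (forall_apply_apply_eq_iff_eq_contragredient (b.domRestrict₁₂ p q) g _).mpr rfl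
    refine ⟨⟨_, hblock g _ (h.isOrthogonal_blockDiagonal hb hg)⟩, LinearEquiv.ext fun x => ?_⟩
    exact Subtype.ext (blockDiagonal_apply_left h.isCompl g _ x)

end IsPolarization

end Polarization

section SkewAdjoint

variable {R M : Type*} [CommRing R] [AddCommGroup M] [Module R M] {b : LinearMap.BilinForm R M}
  {X : End R M}

theorem isSkewAdjoint_of_apply_self_eq_zero (hb : b.IsSymm) (hX : ∀ v, b (X v) v = 0) :
    b.IsSkewAdjoint X := by
  intro u v
  have halt : LinearMap.IsAlt (b ∘ₗ X) := hX
  calc b (X u) v = -b (X v) u := (halt.neg v u).symm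
    _ = b u (-X v) := by rw [hb.eq, map_neg]

theorem mul_self_eq_neg_one_of_isSkewAdjoint_of_isOrthogonal (hb : Injective b)
    (hskew : b.IsSkewAdjoint X) (horth : b.IsOrthogonal X) : X * X = -1 := by
  refine LinearMap.ext fun u => hb (LinearMap.ext fun v => ?_)
  calc b (X (X u)) v = b (X u) (-X v) := hskew (X u) v
    _ = b (-u) v := by rw [map_neg, horth, map_neg, LinearMap.neg_apply]

theorem apply_eq_zero_of_mem_eigenspace_of_isSkewAdjoint (hskew : b.IsSkewAdjoint X) {μ ν : R}
    (hμν : IsLeftRegular (μ + ν)) {u v : M} (hu : u ∈ X.eigenspace μ) (hv : v ∈ X.eigenspace ν) :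
    b u v = 0 := by
  rw [End.mem_eigenspace_iff] at hu hv
  have h : μ * b u v = -(ν * b u v) := by simpa [hu, hv] using hskew u v
  apply hμν
  linear_combination h

theorem isPolarization_eigenspace {i : R} (h2 : IsUnit (2 : R)) (hi : i ^ 2 = -1)
    (hskew : b.IsSkewAdjoint X) (hsq : X * X = -1) :
    IsPolarization b (X.eigenspace i) (X.eigenspace (-i)) := by
  have hi_unit : IsUnit i := IsUnit.of_mul_eq_one (-i) (by linear_combination -hi)
  have hsub : IsUnit (i - -i) := by simpa [two_mul] using h2.mul hi_unit
  have hfactor : (X - algebraMap R (End R M) i) * (X - algebraMap R (End R M) (-i)) = 0 := by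
    have hcomm : Commute X (algebraMap R (End R M) i) := (Algebra.commutes i X).symm
    rw [map_neg, sub_neg_eq_add, ← hcomm.mul_self_sub_mul_self_eq', hsq, ← map_mul, ← sq, hi,
      map_neg, map_one, sub_self]
  refine ⟨isCompl_eigenspace_of_isUnit_sub hsub hfactor, fun u hu v hv => ?_, fun u hu v hv => ?_⟩
  · refine apply_eq_zero_of_mem_eigenspace_of_isSkewAdjoint hskew ?_ hu hv
    simpa using hsub.isRegular.left
  · refine apply_eq_zero_of_mem_eigenspace_of_isSkewAdjoint hskew ?_ hu hv
    simpa [add_comm] using hsub.neg.isRegular.left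

end SkewAdjoint

theorem isPerfPair_of_nondegenerate {F V : Type*} [Field F] [AddCommGroup V] [Module F V]
    [FiniteDimensional F V] {b : LinearMap.BilinForm F V} (hb : b.Nondegenerate) : b.IsPerfPair :=
  .of_injective (LinearMap.ker_eq_bot.mp hb.ker_eq_bot) (LinearMap.ker_eq_bot.mp hb.flip.ker_eq_bot)

theorem stmt13_general (R M : Type*) [CommRing R] [AddCommGroup M] [Module R M]
    (h2 : IsUnit (2 : R)) (i : R) (hi : i ^ 2 = -1)
    (b : LinearMap.BilinForm R M) [b.IsPerfPair] (hb : b.IsSymm)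
    (X : M →ₗ[R] M) (hX : ∀ v, b (X v) v = 0) (hXX : ∀ v, b (X v) (X v) = b v v)
    (Mp Mm : Submodule R M) (hMp : ∀ v, v ∈ Mp ↔ X v = i • v) (hMm : ∀ v, v ∈ Mm ↔ X v = (-i) • v)
    (A : Subgroup (M ≃ₗ[R] M)) (hA : ∀ φ, φ ∈ A ↔ ∀ v, φ (X v) = X (φ v)) :
    (∀ φ ∈ A, (∀ x ∈ Mp, φ x ∈ Mp) ∧ (∀ x ∈ Mm, φ x ∈ Mm)) ∧
    (∃ e : A ≃* (Mp ≃ₗ[R] Mp) × (Mm ≃ₗ[R] Mm),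
      ∀ φ : A, (∀ x : Mp, ((e φ).1 x : M) = φ.1 (x : M)) ∧
        (∀ x : Mm, ((e φ).2 x : M) = φ.1 (x : M))) ∧
    (∀ B : Subgroup (M ≃ₗ[R] M),
      (∀ φ : M ≃ₗ[R] M, φ ∈ B ↔ (φ ∈ A ∧ ∀ u v : M, b (φ u) (φ v) = b u v)) →
      ∃ e : B ≃* (Mp ≃ₗ[R] Mp), ∀ φ : B, ∀ x : Mp, ((e φ) x : M) = φ.1 (x : M)) := by
  obtain rfl : Mp = End.eigenspace X i := by ext v; rw [hMp, End.mem_eigenspace_iff]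
  obtain rfl : Mm = End.eigenspace X (-i) := by ext v; rw [hMm, End.mem_eigenspace_iff]
  have hskew := isSkewAdjoint_of_apply_self_eq_zero hb hX
  have horth := LinearMap.isOrthogonal_of_forall_apply_same X h2.isRegular.left ⟨hb.eq⟩ hXX
  have hsq := mul_self_eq_neg_one_of_isSkewAdjoint_of_isOrthogonal
    b.toPerfPair.injective hskew horth
  have hpol := isPolarization_eigenspace h2 hi hskew hsq
  have hpres (c : R) (φ) (hφ : φ ∈ A) (x) (hx : x ∈ End.eigenspace X c) :
      φ x ∈ End.eigenspace X c :=
    apply_mem_eigenspace_of_commute ((hA φ).mp hφ) hx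
  have hblock (g k) : blockDiagonal hpol.isCompl g k ∈ A :=
    (hA _).mpr (blockDiagonal_eigenspace_apply_comm hpol.isCompl g k)
  refine ⟨fun φ hφ => ⟨hpres i φ hφ, hpres (-i) φ hφ⟩, ?_, fun B hB => ?_⟩
  · exact ⟨.ofBijective _ (restrictHom_prod_bijective hpol.isCompl (hpres i) (hpres (-i)) hblock),
      fun φ => ⟨coe_restrictHom_apply (hpres i) φ, coe_restrictHom_apply (hpres (-i)) φ⟩⟩
  · have hpresB (c : R) (φ) (hφ : φ ∈ B) := hpres c φ ((hB φ).mp hφ).1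
    exact ⟨.ofBijective _ (hpol.restrictHom_bijective hb (hpresB i) (hpresB (-i))
      (fun φ hφ => ((hB φ).mp hφ).2) fun g k hgk => (hB _).mpr ⟨hblock g k, hgk⟩),
      coe_restrictHom_apply (hpresB i)⟩

/-- with `V₊`, `V₋` the `±i` eigenspaces of the 1-fold cross product `X`,
any `A = Aut(V, X)` preserves `V₊` and `V₋`, restriction gives a group isomorphism
`Aut(V, X) ≅ GL(V₊) × GL(V₋)`, and restriction to `V₊` gives a group isomorphism of the
subgroup of `b`-isometries of `Aut(V, X)` onto `GL(V₊)`. -/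
theorem stmt13 (F V : Type*) [Field F] [AddCommGroup V] [Module F V] [FiniteDimensional F V]
    (hchar : (2 : F) ≠ 0) (i : F) (hi : i ^ 2 = -1)
    (b : LinearMap.BilinForm F V)
    (hbnd : b.Nondegenerate) (hbsymm : ∀ u v : V, b u v = b v u)
    (X : V →ₗ[F] V) (hX : IsOneFoldCrossProduct b X)
    (Vp Vm : Submodule F V)
    (hVp : ∀ v : V, v ∈ Vp ↔ X v = i • v)
    (hVm : ∀ v : V, v ∈ Vm ↔ X v = (-i) • v)
    (A : Subgroup (V ≃ₗ[F] V))
    (hA : ∀ φ : V ≃ₗ[F] V, φ ∈ A ↔ ∀ v : V, φ (X v) = X (φ v)) :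
    (∀ φ ∈ A, (∀ x ∈ Vp, φ x ∈ Vp) ∧ (∀ x ∈ Vm, φ x ∈ Vm)) ∧
    (∃ e : A ≃* (Vp ≃ₗ[F] Vp) × (Vm ≃ₗ[F] Vm),
      ∀ φ : A, (∀ x : Vp, ((e φ).1 x : V) = φ.1 (x : V)) ∧
        (∀ x : Vm, ((e φ).2 x : V) = φ.1 (x : V))) ∧
    (∀ B : Subgroup (V ≃ₗ[F] V),
      (∀ φ : V ≃ₗ[F] V, φ ∈ B ↔ (φ ∈ A ∧ ∀ u v : V, b (φ u) (φ v) = b u v)) →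
      ∃ e : B ≃* (Vp ≃ₗ[F] Vp), ∀ φ : B, ∀ x : Vp, ((e φ) x : V) = φ.1 (x : V)) := by
  have := isPerfPair_of_nondegenerate hbnd
  exact stmt13_general F V hchar.isUnit i hi b ⟨hbsymm⟩ X hX.1 hX.2 Vp Vm hVp hVm A hA
end

section
/- Let F be a field of characteristic different from 2 and ℍ[F] the quaternion algebra over F, with conjugation x ↦ x̄, norm N(x) = x·x̄ ∈ F, and polar form n(x, y) = N(x + y) − N(x) − N(y). Define X : ℍ[F]³ → ℍ[F] by X(x, y, z) = x·ȳ·z − z·ȳ·x. Then X is an alternating trilinear map satisfying, for all x, y, z ∈ ℍ[F]: n(X(x,y,z), x) = n(X(x,y,z), y) = n(X(x,y,z), z) = 0 and n(X(x,y,z), X(x,y,z)) = det of the 3×3 matrix with entries n(x,x), n(x,y), n(x,z); n(y,x), n(y,y), n(y,z); n(z,x), n(z,y), n(z,z). Hence X is a 3-fold cross product on ℍ[F] relative to the nondegenerate symmetric bilinear form n. -/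
/-!
Polarizing `x x̄ = x̄ x = N(x)` gives `x ȳ + y x̄ = x̄ y + ȳ x = n(x, y)`, and hence

  `x ȳ z + z ȳ x = n(x, y) z + n(y, z) x − n(x, z) y`.

The two summands on the left both have norm `N(x) N(y) N(z)`, so the parallelogram law expresses
the norm of their difference `X(x, y, z)` through the norm of the right-hand side, and expanding
the latter produces the Gram determinant. Orthogonality holds because left and right
multiplication by `a` have as adjoints the multiplications by `ā`, and `x x̄` is central.
-/

open Quaternion

/-- The polar form `n(x,y) = N(x+y) − N(x) − N(y)` of the quaternion norm
`N = normSq`. -/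
def qPolar (F : Type*) [Field F] (x y : ℍ[F]) : F :=
  Quaternion.normSq (x + y) - Quaternion.normSq x - Quaternion.normSq y

/-- The triple product `X(x,y,z) = x·ȳ·z − z·ȳ·x` on the quaternions. -/
def qCross (F : Type*) [Field F] (x y z : ℍ[F]) : ℍ[F] :=
  x * star y * z - z * star y * x

open QuadraticMap (polar)

section QuadraticMap

theorem quadraticMap_map_add_add_map_sub {R M N : Type*} [CommRing R] [AddCommGroup M]
    [AddCommGroup N] [Module R M] [Module R N] (Q : QuadraticMap R M N) (x y : M) :
    Q (x + y) + Q (x - y) = 2 • (Q x + Q y) := by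
  rw [sub_eq_add_neg, QuadraticMap.map_add Q, QuadraticMap.map_add Q, QuadraticMap.map_neg,
    QuadraticMap.polar_neg_right]
  abel

variable {R M : Type*} [CommRing R] [AddCommGroup M] [Module R M] (Q : QuadraticForm R M)

theorem quadraticForm_map_polar_smul_add_sub (x y z : M) :
    Q (polar Q x y • z + polar Q y z • x - polar Q x z • y) =
      polar Q x y ^ 2 * Q z + polar Q y z ^ 2 * Q x + polar Q x z ^ 2 * Q y
        - polar Q x y * polar Q y z * polar Q x z := by
  simp only [sub_eq_add_neg, QuadraticMap.map_add Q, QuadraticMap.map_smul, QuadraticMap.map_neg,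
    QuadraticMap.polar_add_left, QuadraticMap.polar_smul_left, QuadraticMap.polar_smul_right,
    QuadraticMap.polar_neg_right, smul_eq_mul]
  rw [QuadraticMap.polar_comm Q z x, QuadraticMap.polar_comm Q z y]
  ring

theorem det_polar_fin_three (x y z : M) :
    Matrix.det !![polar Q x x, polar Q x y, polar Q x z;
                  polar Q y x, polar Q y y, polar Q y z;
                  polar Q z x, polar Q z y, polar Q z z] =
      2 * (4 * (Q x * Q y * Q z) -
        Q (polar Q x y • z + polar Q y z • x - polar Q x z • y)) := by
  simp only [Matrix.det_fin_three, Matrix.of_apply, Matrix.cons_val', Matrix.cons_val,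
    QuadraticMap.polar_self, nsmul_eq_mul, Nat.cast_ofNat, quadraticForm_map_polar_smul_add_sub]
  rw [QuadraticMap.polar_comm Q y x, QuadraticMap.polar_comm Q z x, QuadraticMap.polar_comm Q z y]
  ring

end QuadraticMap

section StarRing

variable {A : Type*} [NonUnitalRing A] [StarRing A]

/-- The triple product `X(x, y, z) = x ȳ z − z ȳ x` of a ring with involution; `qCross` is the case
of quaternions over a field. -/
def tripleCross (x y z : A) : A := x * star y * z - z * star y * x

theorem tripleCross_add_left (x x' y z : A) :
    tripleCross (x + x') y z = tripleCross x y z + tripleCross x' y z := by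
  simp only [tripleCross, add_mul, mul_add, add_sub_add_comm]

theorem tripleCross_add_middle (x y y' z : A) :
    tripleCross x (y + y') z = tripleCross x y z + tripleCross x y' z := by
  simp only [tripleCross, star_add, add_mul, mul_add, add_sub_add_comm]

theorem tripleCross_swap (x y z : A) : tripleCross z y x = -tripleCross x y z :=
  (neg_sub _ _).symm

theorem tripleCross_add_right (x y z z' : A) :
    tripleCross x y (z + z') = tripleCross x y z + tripleCross x y z' := by
  simp only [tripleCross_swap _ y x, tripleCross_add_left, neg_add]

theorem tripleCross_self_right (x y : A) : tripleCross x y x = 0 :=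
  sub_self _

variable {S : Type*} [Monoid S] [DistribMulAction S A] [IsScalarTower S A A] [SMulCommClass S A A]

theorem tripleCross_smul_left (c : S) (x y z : A) :
    tripleCross (c • x) y z = c • tripleCross x y z := by
  simp only [tripleCross, smul_mul_assoc, mul_smul_comm, smul_sub]

theorem tripleCross_smul_right (c : S) (x y z : A) :
    tripleCross x y (c • z) = c • tripleCross x y z := by
  simp only [tripleCross_swap _ y x, tripleCross_smul_left, smul_neg]

end StarRing

section Quaternion

variable {R : Type*} [CommRing R]

theorem re_mul_comm (x y : ℍ[R]) : (x * y).re = (y * x).re := by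
  simp only [re_mul]
  ring

theorem polar_normSq (x y : ℍ[R]) : polar (normSq : ℍ[R] → R) x y = 2 * (x * star y).re := by
  rw [polar, normSq_add]
  ring

variable (R) in
/-- The quaternion norm `N`, bundled as a quadratic form; its polar form is `n`. -/
def normSqForm : QuadraticForm R ℍ[R] :=
  QuadraticMap.ofPolar normSq
    (fun c x ↦ by rw [normSq_smul, sq, smul_eq_mul])
    (fun x x' y ↦ by simp only [polar_normSq, add_mul, re_add, mul_add])
    (fun c x y ↦ by simp only [polar_normSq, smul_mul_assoc, re_smul, mul_smul_comm])

theorem normSqForm_apply (x : ℍ[R]) : normSqForm R x = normSq x :=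
  rfl

theorem polar_normSqForm (x y : ℍ[R]) : polar (normSqForm R) x y = 2 * (x * star y).re :=
  polar_normSq x y

theorem eq_zero_of_forall_polar_normSqForm_eq_zero (h2 : IsLeftRegular (2 : R)) {x : ℍ[R]}
    (hx : ∀ y, polar (normSqForm R) x y = 0) : x = 0 := by
  have re_mul_eq_zero (y : ℍ[R]) : (x * y).re = 0 := by
    have polar_star_eq_zero := hx (star y)
    rwa [polar_normSqForm, star_star, h2.mul_left_eq_zero_iff] at polar_star_eq_zero
  have dot_eq_zero (a b c d : R) : x.re * a - x.imI * b - x.imJ * c - x.imK * d = 0 :=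
    (re_mul x ⟨a, b, c, d⟩).symm.trans (re_mul_eq_zero _)
  ext
  · simpa using dot_eq_zero 1 0 0 0
  · simpa using dot_eq_zero 0 1 0 0
  · simpa using dot_eq_zero 0 0 1 0
  · simpa using dot_eq_zero 0 0 0 1

theorem polar_normSqForm_mul_left (a x y : ℍ[R]) :
    polar (normSqForm R) (a * x) y = polar (normSqForm R) x (star a * y) := by
  rw [polar_normSqForm, polar_normSqForm, star_mul, star_star, mul_assoc, re_mul_comm, mul_assoc]

theorem polar_normSqForm_mul_right (a x y : ℍ[R]) :
    polar (normSqForm R) (x * a) y = polar (normSqForm R) x (y * star a) := by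
  rw [polar_normSqForm, polar_normSqForm, star_mul, star_star, mul_assoc]

theorem polar_normSqForm_smul_eq_mul_left (x y z : ℍ[R]) :
    polar (normSqForm R) x y • z = (x * star y + y * star x) * z := by
  rw [← coe_mul_eq_smul, polar]
  simp only [normSqForm_apply, coe_sub, coe_normSq_add]
  noncomm_ring

theorem polar_normSqForm_smul_eq_mul_right (x y z : ℍ[R]) :
    polar (normSqForm R) x y • z = z * (star x * y + star y * x) := by
  rw [← mul_coe_eq_smul, polar]
  simp only [normSqForm_apply, coe_sub, ← star_mul_self, star_add]
  noncomm_ring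

theorem mul_star_mul_add_mul_star_mul (x y z : ℍ[R]) :
    x * star y * z + z * star y * x =
      polar (normSqForm R) x y • z + polar (normSqForm R) y z • x
        - polar (normSqForm R) x z • y := by
  rw [polar_normSqForm_smul_eq_mul_left x y, polar_normSqForm_smul_eq_mul_left y z,
    polar_normSqForm_smul_eq_mul_right x z]
  noncomm_ring

theorem tripleCross_smul_middle (c : R) (x y z : ℍ[R]) :
    tripleCross x (c • y) z = c • tripleCross x y z := by
  simp only [tripleCross, Quaternion.star_smul, smul_mul_assoc, mul_smul_comm, smul_sub]

theorem tripleCross_self_left (x z : ℍ[R]) : tripleCross x x z = 0 := by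
  rw [tripleCross, mul_assoc z, self_mul_star, star_mul_self, coe_commutes, sub_self]

theorem tripleCross_self_middle (x y : ℍ[R]) : tripleCross x y y = 0 := by
  rw [tripleCross_swap, tripleCross_self_left, neg_zero]

theorem polar_normSqForm_tripleCross_left (x y z : ℍ[R]) :
    polar (normSqForm R) (tripleCross x y z) x = 0 := by
  have first_term : polar (normSqForm R) (x * star y * z) x =
      polar (normSqForm R) z (normSq x • y) := by
    rw [polar_normSqForm_mul_left, star_mul, star_star, mul_assoc, star_mul_self, mul_coe_eq_smul]
  have second_term : polar (normSqForm R) (z * star y * x) x =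
      polar (normSqForm R) z (normSq x • y) := by
    rw [polar_normSqForm_mul_right, polar_normSqForm_mul_right, star_star, self_mul_star,
      coe_mul_eq_smul]
  rw [tripleCross, QuadraticMap.polar_sub_left, first_term, second_term, sub_self]

theorem polar_normSqForm_tripleCross_middle (x y z : ℍ[R]) :
    polar (normSqForm R) (tripleCross x y z) y = 0 := by
  rw [tripleCross, QuadraticMap.polar_sub_left, polar_normSqForm_mul_left, mul_assoc z,
    polar_normSqForm_mul_right, star_mul, star_mul, star_star, mul_assoc, sub_self]

theorem polar_normSqForm_tripleCross_right (x y z : ℍ[R]) :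
    polar (normSqForm R) (tripleCross x y z) z = 0 := by
  rw [tripleCross_swap, QuadraticMap.polar_neg_left, polar_normSqForm_tripleCross_left, neg_zero]

theorem normSqForm_mul_star_mul (x y z : ℍ[R]) :
    normSqForm R (x * star y * z) = normSqForm R x * normSqForm R y * normSqForm R z := by
  simp only [normSqForm_apply, map_mul, normSq_star]

theorem normSqForm_tripleCross (x y z : ℍ[R]) :
    normSqForm R (tripleCross x y z) =
      4 * (normSqForm R x * normSqForm R y * normSqForm R z) -
        normSqForm R (polar (normSqForm R) x y • z + polar (normSqForm R) y z • x
          - polar (normSqForm R) x z • y) := by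
  have parallelogram :=
    quadraticMap_map_add_add_map_sub (normSqForm R) (x * star y * z) (z * star y * x)
  rw [mul_star_mul_add_mul_star_mul, normSqForm_mul_star_mul, normSqForm_mul_star_mul,
    two_nsmul] at parallelogram
  rw [tripleCross]
  linear_combination parallelogram

theorem polar_normSqForm_tripleCross_self (x y z : ℍ[R]) :
    polar (normSqForm R) (tripleCross x y z) (tripleCross x y z) =
      Matrix.det
        !![polar (normSqForm R) x x, polar (normSqForm R) x y, polar (normSqForm R) x z;
           polar (normSqForm R) y x, polar (normSqForm R) y y, polar (normSqForm R) y z;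
           polar (normSqForm R) z x, polar (normSqForm R) z y, polar (normSqForm R) z z] := by
  rw [det_polar_fin_three, QuadraticMap.polar_self, normSqForm_tripleCross, nsmul_eq_mul,
    Nat.cast_ofNat]

end Quaternion

theorem stmt14_general {R : Type*} [CommRing R] (h2 : IsLeftRegular (2 : R)) :
    (∀ x x' y z : ℍ[R], tripleCross (x + x') y z = tripleCross x y z + tripleCross x' y z) ∧
    (∀ (c : R) (x y z : ℍ[R]), tripleCross (c • x) y z = c • tripleCross x y z) ∧
    (∀ x y y' z : ℍ[R], tripleCross x (y + y') z = tripleCross x y z + tripleCross x y' z) ∧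
    (∀ (c : R) (x y z : ℍ[R]), tripleCross x (c • y) z = c • tripleCross x y z) ∧
    (∀ x y z z' : ℍ[R], tripleCross x y (z + z') = tripleCross x y z + tripleCross x y z') ∧
    (∀ (c : R) (x y z : ℍ[R]), tripleCross x y (c • z) = c • tripleCross x y z) ∧
    (∀ x z : ℍ[R], tripleCross x x z = 0) ∧
    (∀ x y : ℍ[R], tripleCross x y y = 0) ∧
    (∀ x y : ℍ[R], tripleCross x y x = 0) ∧
    (∀ x x' y : ℍ[R], polar (normSqForm R) (x + x') y =
      polar (normSqForm R) x y + polar (normSqForm R) x' y) ∧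
    (∀ (c : R) (x y : ℍ[R]), polar (normSqForm R) (c • x) y = c * polar (normSqForm R) x y) ∧
    (∀ x y : ℍ[R], polar (normSqForm R) x y = polar (normSqForm R) y x) ∧
    (∀ x : ℍ[R], (∀ y : ℍ[R], polar (normSqForm R) x y = 0) → x = 0) ∧
    (∀ x y z : ℍ[R],
      polar (normSqForm R) (tripleCross x y z) x = 0 ∧
      polar (normSqForm R) (tripleCross x y z) y = 0 ∧
      polar (normSqForm R) (tripleCross x y z) z = 0) ∧
    (∀ x y z : ℍ[R],
      polar (normSqForm R) (tripleCross x y z) (tripleCross x y z) =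
        Matrix.det
          !![polar (normSqForm R) x x, polar (normSqForm R) x y, polar (normSqForm R) x z;
             polar (normSqForm R) y x, polar (normSqForm R) y y, polar (normSqForm R) y z;
             polar (normSqForm R) z x, polar (normSqForm R) z y, polar (normSqForm R) z z]) :=
  ⟨tripleCross_add_left, tripleCross_smul_left,
    tripleCross_add_middle, tripleCross_smul_middle,
    tripleCross_add_right, tripleCross_smul_right,
    tripleCross_self_left, tripleCross_self_middle, tripleCross_self_right,
    QuadraticMap.polar_add_left _, QuadraticMap.polar_smul_left _, QuadraticMap.polar_comm _,
    fun _ ↦ eq_zero_of_forall_polar_normSqForm_eq_zero h2,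
    fun x y z ↦ ⟨polar_normSqForm_tripleCross_left x y z,
      polar_normSqForm_tripleCross_middle x y z, polar_normSqForm_tripleCross_right x y z⟩,
    polar_normSqForm_tripleCross_self⟩

/-- `X(x,y,z) = x·ȳ·z − z·ȳ·x` is an alternating trilinear map on the
quaternions which is a 3-fold cross product relative to the nondegenerate symmetric
bilinear polar form `n` of the quaternion norm. -/
theorem stmt14 (F : Type*) [Field F] (hchar : (2 : F) ≠ 0) :
    -- `X` is trilinear:
    (∀ (x x' y z : ℍ[F]), qCross F (x + x') y z = qCross F x y z + qCross F x' y z) ∧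
    (∀ (c : F) (x y z : ℍ[F]), qCross F (c • x) y z = c • qCross F x y z) ∧
    (∀ (x y y' z : ℍ[F]), qCross F x (y + y') z = qCross F x y z + qCross F x y' z) ∧
    (∀ (c : F) (x y z : ℍ[F]), qCross F x (c • y) z = c • qCross F x y z) ∧
    (∀ (x y z z' : ℍ[F]), qCross F x y (z + z') = qCross F x y z + qCross F x y z') ∧
    (∀ (c : F) (x y z : ℍ[F]), qCross F x y (c • z) = c • qCross F x y z) ∧
    -- `X` is alternating:
    (∀ x z : ℍ[F], qCross F x x z = 0) ∧
    (∀ x y : ℍ[F], qCross F x y y = 0) ∧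
    (∀ x y : ℍ[F], qCross F x y x = 0) ∧
    -- `n` is a nondegenerate symmetric bilinear form:
    (∀ (x x' y : ℍ[F]), qPolar F (x + x') y = qPolar F x y + qPolar F x' y) ∧
    (∀ (c : F) (x y : ℍ[F]), qPolar F (c • x) y = c * qPolar F x y) ∧
    (∀ x y : ℍ[F], qPolar F x y = qPolar F y x) ∧
    (∀ x : ℍ[F], (∀ y : ℍ[F], qPolar F x y = 0) → x = 0) ∧
    -- the two axioms of a 3-fold cross product relative to `n`:
    (∀ x y z : ℍ[F],
      qPolar F (qCross F x y z) x = 0 ∧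
      qPolar F (qCross F x y z) y = 0 ∧
      qPolar F (qCross F x y z) z = 0) ∧
    (∀ x y z : ℍ[F],
      qPolar F (qCross F x y z) (qCross F x y z) =
        Matrix.det !![qPolar F x x, qPolar F x y, qPolar F x z;
                      qPolar F y x, qPolar F y y, qPolar F y z;
                      qPolar F z x, qPolar F z y, qPolar F z z]) := by
  exact stmt14_general (IsRegular.of_ne_zero hchar).left
end

section
/- Let F be an algebraically closed field of characteristic different from 2, V an F-vector space of dimension n ≥ 3, X : V^{n−1} → V an alternating (n−1)-fold cross product relative to a nondegenerate symmetric bilinear form b, and G an abelian group. Two G-gradings V = ⊕_{g∈G} V_g and V = ⊕_{g∈G} V'_g on (V, X) are isomorphic (i.e. there is an invertible linear map φ : V → V with φ(X(v₁,…,v_{n−1})) = X(φ(v₁),…,φ(v_{n−1})) for all v₁,…,v_{n−1} ∈ V and φ(V_g) = V'_g for all g ∈ G) if and only if dim V_g = dim V'_g for every g ∈ G. -/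
/-!
Let `m = n - 1`. The form `(v₀, …, vₘ) ↦ b (X (v₁, …, vₘ)) v₀` is alternating, and it is nonzero
because an orthogonal basis has nonzero Gram determinants. So for every basis `e` of `V` the vectors
`X (e₀, …, êₖ, …, eₘ)` are nonzero multiples of the vectors of the `b`-dual basis. If each `eᵢ` is
homogeneous of degree `dᵢ`, the `k`-th dual vector is therefore homogeneous of degree `∏ j ≠ k, dⱼ`.
Hence `𝒱 g` is cut out by the equations `b u eₖ = 0` for those `k` with `∏ j ≠ k, dⱼ ≠ g`, and which
`k` occur depends only on the dimensions of the components.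

If the dimensions agree, choose a linear isomorphism `ψ` with `ψ (𝒱 g) = 𝒲 g` and write
`b (ψ u) (ψ v) = b (S u) v`. By the previous remark the invertible self-adjoint map `S` preserves
each `𝒱 g`, and so does a square root `R` of `S` that is a polynomial in `S`. As `R` is self-adjoint
too, `φ = ψ ∘ R⁻¹` is an isometry, still with `φ (𝒱 g) = 𝒲 g`.

Since top-degree forms are proportional, `X (φ v₁, …, φ vₘ) = a • φ (X (v₁, …, vₘ))` for some
`a ≠ 0`. As `m ≥ 2`, there is a `t` with `t ^ (m - 1) = a⁻¹`, and `t • φ` commutes with `X`.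
-/

open Module

section PowerRoots

open Polynomial

theorem exists_pow_eq_of_isUnit (F : Type*) {A : Type*} [Field F] [IsAlgClosed F] [CommRing A]
    [Algebra F A] [Module.Finite F A] {k : ℕ} (hk : (k : F) ≠ 0) {a : A} (ha : IsUnit a) :
    ∃ r : A, r ^ k = a := by
  have : IsArtinianRing A := IsArtinianRing.of_finite F A
  have hk0 : k ≠ 0 := by rintro rfl; exact hk Nat.cast_zero
  have exists_root_mod (I : MaximalSpectrum A) :
      ∃ y : A ⧸ I.asIdeal, y ^ k = Ideal.Quotient.mk I.asIdeal a := by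
    obtain ⟨c, hc⟩ := (IsAlgClosed.algebraMap_bijective_of_isIntegral (k := F)).surjective
      (Ideal.Quotient.mk I.asIdeal a)
    obtain ⟨z, rfl⟩ := IsAlgClosed.exists_pow_nat_eq c (Nat.pos_of_ne_zero hk0)
    exact ⟨algebraMap F _ z, by rw [← map_pow, hc]⟩
  choose y hy using exists_root_mod
  -- Roots in the residue fields glue to a root modulo the nilradical, which Newton's method lifts.
  obtain ⟨s, hs⟩ := Ideal.Quotient.mk_surjective ((IsArtinianRing.quotNilradicalEquivPi A).symm y)
  have hnil : IsNilpotent (s ^ k - a) := by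
    let e := IsArtinianRing.quotNilradicalEquivPi A
    have he : e (Ideal.Quotient.mk _ (s ^ k)) = e (Ideal.Quotient.mk _ a) := by
      rw [map_pow, map_pow, hs, AlgEquiv.apply_symm_apply]
      exact (funext hy).trans (e.commutes a).symm
    rw [← mem_nilradical, ← Ideal.Quotient.mk_eq_mk_iff_sub_mem]
    exact e.injective he
  have hs_unit : IsUnit s := by
    rw [← isUnit_pow_iff hk0, ← add_sub_cancel a (s ^ k)]
    exact hnil.isUnit_add_left_of_commute ha (Commute.all _ _)
  have hnil' : IsNilpotent (aeval s (X ^ k - C a)) := by simpa using hnil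
  have hderiv : IsUnit (aeval s (derivative (X ^ k - C a))) := by
    have : IsUnit (k : A) := by simpa using (IsUnit.mk0 _ hk).map (algebraMap F A)
    simpa [derivative_X_pow] using this.mul (hs_unit.pow (k - 1))
  obtain ⟨r, ⟨-, hr⟩, -⟩ := existsUnique_nilpotent_sub_and_aeval_eq_zero hnil' hderiv
  exact ⟨r, by simpa [sub_eq_zero] using hr⟩

theorem exists_aeval_pow_eq_of_isUnit {F A : Type*} [Field F] [IsAlgClosed F] [Ring A]
    [Algebra F A] [Module.Finite F A] {k : ℕ} (hk : (k : F) ≠ 0) {a : A} (ha : IsUnit a) :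
    ∃ p : F[X], aeval a p ^ k = a := by
  let B := Algebra.adjoin F {a}
  let a' : B := ⟨a, Algebra.self_mem_adjoin_singleton F a⟩
  have : IsArtinianRing B := IsArtinianRing.of_finite F B
  have ha' : IsUnit a' := IsArtinianRing.isUnit_of_mem_nonZeroDivisors <|
    comap_nonZeroDivisors_le_of_injective (f := B.val) Subtype.val_injective ha.mem_nonZeroDivisors
  obtain ⟨r, hr⟩ := exists_pow_eq_of_isUnit F hk ha'
  obtain ⟨p, hp⟩ : (r : A) ∈ (aeval (R := F) a).range :=
    Algebra.adjoin_singleton_eq_range_aeval F a ▸ r.2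
  exact ⟨p, (congrArg (· ^ k) hp).trans (congrArg Subtype.val hr)⟩

theorem isSelfAdjoint_aeval {R M : Type*} [CommRing R] [AddCommGroup M] [Module R M]
    {B : LinearMap.BilinForm R M} {f : Module.End R M} (hf : B.IsSelfAdjoint f) (p : R[X]) :
    B.IsSelfAdjoint (aeval f p) := by
  induction p using Polynomial.induction_on with
  | C r => intro u v; simp [Module.algebraMap_end_apply]
  | add p q hp hq => rw [map_add]; exact hp.add hq
  | monomial n r hn =>
    have hcomm : aeval f (C r * X ^ (n + 1)) = f * aeval f (C r * X ^ n) := by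
      rw [pow_succ', mul_left_comm, map_mul, aeval_X]
    intro u v
    calc B (aeval f (C r * X ^ (n + 1)) u) v = B (aeval f (C r * X ^ n) (f u)) v := by
          rw [pow_succ, ← mul_assoc, map_mul, aeval_X, Module.End.mul_apply]
      _ = B u (f (aeval f (C r * X ^ n) v)) := by rw [hn, hf]
      _ = B u (aeval f (C r * X ^ (n + 1)) v) := by rw [hcomm, Module.End.mul_apply]

end PowerRoots

theorem exists_isometry_map_eq {F V W : Type*} [Field F] [IsAlgClosed F] [AddCommGroup V]
    [Module F V] [FiniteDimensional F V] [AddCommGroup W] [Module F W] (h2 : (2 : F) ≠ 0)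
    {b : LinearMap.BilinForm F V} (hb_symm : b.IsSymm) {c : LinearMap.BilinForm F W}
    (hc_symm : c.IsSymm) (hc : c.Nondegenerate) (ψ : V ≃ₗ[F] W) {S : Module.End F V}
    (hS : ∀ u v, b (S u) v = c (ψ u) (ψ v)) :
    ∃ φ : V ≃ₗ[F] W, (∀ u v, c (φ u) (φ v) = b u v) ∧
      ∀ U ∈ S.invtSubmodule, U.map (φ : V →ₗ[F] W) = U.map (ψ : V →ₗ[F] W) := by
  have hS_adj : b.IsSelfAdjoint S := fun u v => by rw [hS, hb_symm.eq u, hS, hc_symm.eq]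
  have hS_ker : LinearMap.ker S = ⊥ := by
    refine LinearMap.ker_eq_bot'.mpr fun u hu => ψ.map_eq_zero_iff.mp (hc.1 _ fun w => ?_)
    obtain ⟨v, rfl⟩ := ψ.surjective w
    rw [← hS, hu, map_zero, LinearMap.zero_apply]
  obtain ⟨p, hp⟩ := exists_aeval_pow_eq_of_isUnit (k := 2) (by exact_mod_cast h2)
    ((LinearMap.isUnit_iff_ker_eq_bot S).mpr hS_ker)
  set R : Module.End F V := Polynomial.aeval S p
  have hR_adj : b.IsSelfAdjoint R := isSelfAdjoint_aeval hS_adj p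
  have hR_sq (v : V) : R (R v) = S v := by rw [← Module.End.mul_apply, ← sq, hp]
  have hR_inj : Function.Injective R := fun u v huv =>
    LinearMap.ker_eq_bot.mp hS_ker (by rw [← hR_sq, ← hR_sq, huv])
  let ρ : V ≃ₗ[F] V := LinearEquiv.ofInjectiveEndo R hR_inj
  refine ⟨ρ.symm.trans ψ, fun u v => ?_, fun U hU => ?_⟩
  · obtain ⟨u, rfl⟩ := ρ.surjective u
    obtain ⟨v, rfl⟩ := ρ.surjective v
    calc c (ψ (ρ.symm (ρ u))) (ψ (ρ.symm (ρ v))) = b (R (R u)) v := by simp [hR_sq, hS]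
      _ = b (ρ u) (ρ v) := hR_adj _ _
  · have hρU : U.map (ρ : V →ₗ[F] V) = U :=
      Submodule.eq_of_le_of_finrank_eq
        (Submodule.map_le_iff_le_comap.mpr fun v hv =>
          Polynomial.aeval_apply_smul_mem_of_le_comap hv p S hU)
        (LinearEquiv.finrank_map_eq ρ U)
    rw [LinearEquiv.coe_trans, Submodule.map_comp, (Submodule.map_symm_eq_iff ρ).mpr hρU]

theorem mem_iff_repr_eq_zero_of_homogeneous {R M ι G : Type*} [Ring R] [AddCommGroup M]
    [Module R M] {𝒱 : G → Submodule R M} (h𝒱 : iSupIndep 𝒱) (e : Basis ι R M) {d : ι → G}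
    (he : ∀ i, e i ∈ 𝒱 (d i)) {g : G} {v : M} :
    v ∈ 𝒱 g ↔ ∀ k, d k ≠ g → e.repr v k = 0 := by
  classical
  have filter_mem (p : ι → Prop) [DecidablePred p] (N : Submodule R M) (hN : ∀ i, p i → e i ∈ N) :
      e.repr.symm ((e.repr v).filter p) ∈ N := by
    rw [e.repr_symm_apply, Finsupp.linearCombination_apply, Finsupp.sum, Finsupp.support_filter]
    exact N.sum_mem fun i hi => N.smul_mem _ (hN i (Finset.mem_filter.mp hi).2)
  have h_same := filter_mem (d · = g) (𝒱 g) fun i hi => hi ▸ he i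
  have h_other := filter_mem (d · ≠ g) (⨆ h ≠ g, 𝒱 h) fun i hi =>
    Submodule.mem_iSup_of_mem (d i) (Submodule.mem_iSup_of_mem hi (he i))
  have hv : e.repr.symm ((e.repr v).filter (d · = g)) +
      e.repr.symm ((e.repr v).filter (d · ≠ g)) = v := by
    rw [← map_add, Finsupp.filter_add_filter_not, e.repr.symm_apply_apply]
  calc v ∈ 𝒱 g ↔ e.repr.symm ((e.repr v).filter (d · ≠ g)) ∈ 𝒱 g := by
        conv_lhs => rw [← hv, Submodule.add_mem_iff_right _ h_same]
    _ ↔ e.repr.symm ((e.repr v).filter (d · ≠ g)) = 0 :=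
        ⟨fun h => Submodule.disjoint_def.mp (h𝒱 g) _ h h_other, fun h => h ▸ zero_mem _⟩
    _ ↔ ∀ k, d k ≠ g → e.repr v k = 0 := by
        rw [LinearEquiv.map_eq_zero_iff, Finsupp.filter_eq_zero_iff]

theorem map_equiv_eq_of_homogeneous {R V W ι G : Type*} [CommRing R] [AddCommGroup V] [Module R V]
    [AddCommGroup W] [Module R W] {𝒱 : G → Submodule R V} {𝒲 : G → Submodule R W}
    (h𝒱 : iSupIndep 𝒱) (h𝒲 : iSupIndep 𝒲) {e : Basis ι R V} {e' : Basis ι R W} {d : ι → G}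
    (he : ∀ i, e i ∈ 𝒱 (d i)) (he' : ∀ i, e' i ∈ 𝒲 (d i)) (g : G) :
    (𝒱 g).map (e.equiv e' (Equiv.refl ι) : V →ₗ[R] W) = 𝒲 g := by
  ext w
  rw [Submodule.mem_map_equiv, mem_iff_repr_eq_zero_of_homogeneous h𝒱 e he,
    mem_iff_repr_eq_zero_of_homogeneous h𝒲 e' he']
  simp [Basis.equiv]

theorem exists_homogeneous_bases_of_finrank_eq {F V W G : Type*} [Field F] [AddCommGroup V]
    [Module F V] [FiniteDimensional F V] [AddCommGroup W] [Module F W] [FiniteDimensional F W]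
    [DecidableEq G] {𝒱 : G → Submodule F V} {𝒲 : G → Submodule F W}
    (h𝒱 : DirectSum.IsInternal 𝒱) (h𝒲 : DirectSum.IsInternal 𝒲)
    (hfin : ∀ g, finrank F (𝒱 g) = finrank F (𝒲 g)) {n : ℕ} (hn : finrank F V = n) :
    ∃ (d : Fin n → G) (e : Basis (Fin n) F V) (e' : Basis (Fin n) F W),
      (∀ i, e i ∈ 𝒱 (d i)) ∧ ∀ i, e' i ∈ 𝒲 (d i) := by
  let e := h𝒱.collectedBasis fun g => finBasis F (𝒱 g)
  let e' := h𝒲.collectedBasis fun g => finBasisOfFinrankEq F (𝒲 g) (hfin g).symm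
  let σ := e.indexEquiv (finBasisOfFinrankEq F V hn)
  refine ⟨fun i => (σ.symm i).1, e.reindex σ, e'.reindex σ, fun i => ?_, fun i => ?_⟩
  · rw [Basis.reindex_apply]
    exact h𝒱.collectedBasis_mem _ _
  · rw [Basis.reindex_apply]
    exact h𝒲.collectedBasis_mem _ _

theorem exists_eq_smul_of_ne_zero {F V ι : Type*} [Field F] [AddCommGroup V] [Module F V]
    [Finite ι] (e : Basis ι F V) {f g : V [⋀^ι]→ₗ[F] F} (hf : f ≠ 0) (hg : g ≠ 0) :
    ∃ a : F, a ≠ 0 ∧ f = a • g := by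
  classical
  cases nonempty_fintype ι
  have hfe := (f.map_basis_ne_zero_iff e).mpr hf
  have hge := (g.map_basis_ne_zero_iff e).mpr hg
  refine ⟨f e / g e, div_ne_zero hfe hge, ?_⟩
  calc f = (f e / g e * g e) • e.det := by rw [div_mul_cancel₀ _ hge, ← f.eq_smul_basis_det e]
    _ = (f e / g e) • g := by rw [mul_smul, ← g.eq_smul_basis_det e]

/-- An alternating cross product with the Gram determinant condition weakened to `X ≠ 0`: a nonzero
alternating product whose values are orthogonal to its arguments. -/
structure IsOrthogonalProduct {R M : Type*} [CommRing R] [AddCommGroup M] [Module R M] {m : ℕ}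
    (b : LinearMap.BilinForm R M) (X : M [⋀^Fin m]→ₗ[R] M) : Prop where
  ne_zero : X ≠ 0
  apply_eq_zero : ∀ v i, b (X v) (v i) = 0

theorem IsCrossProduct.isOrthogonalProduct {F V : Type*} [Field F] [AddCommGroup V] [Module F V]
    [FiniteDimensional F V] (h2 : (2 : F) ≠ 0) {b : LinearMap.BilinForm F V} (hb : b.Nondegenerate)
    (hb_symm : b.IsSymm) {r : ℕ} (hr : r ≤ finrank F V) {X : V [⋀^Fin r]→ₗ[F] V}
    (hX : IsCrossProduct b X.toMultilinearMap) : IsOrthogonalProduct b X where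
  ne_zero := by
    have : Invertible (2 : F) := invertibleOfNonzero h2
    obtain ⟨e, he⟩ := LinearMap.BilinForm.exists_orthogonal_basis (B := b) ⟨hb_symm.eq⟩
    let w : Fin r → V := fun i => e (Fin.castLE hr i)
    have gram_eq : (Matrix.of fun i j => b (w i) (w j)) = Matrix.diagonal fun i => b (w i) (w i) :=
      (Matrix.isDiag_iff_diagonal_diag _).mp (fun i j hij => he (by simpa using hij)) |>.symm
    have gram_ne_zero : (Matrix.of fun i j => b (w i) (w j)).det ≠ 0 := by
      rw [gram_eq, Matrix.det_diagonal]
      exact Finset.prod_ne_zero_iff.mpr fun i _ =>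
        he.not_isOrtho_basis_self_of_separatingLeft hb.1 _
    rintro rfl
    exact gram_ne_zero ((hX.2 w).symm.trans (by simp))
  apply_eq_zero := hX.1

namespace IsOrthogonalProduct

section VolForm

variable {R M : Type*} [CommRing R] [AddCommGroup M] [Module R M] {m : ℕ}
  {b : LinearMap.BilinForm R M} {X : M [⋀^Fin m]→ₗ[R] M} (hX : IsOrthogonalProduct b X)

/-- The top-degree form `(v₀, …, vₘ) ↦ b (X (v₁, …, vₘ)) v₀` of an orthogonal product, which
determines `X` when `b` is nondegenerate. -/
def volForm : M [⋀^Fin (m + 1)]→ₗ[R] R where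
  __ := LinearMap.uncurryLeft (M := fun _ : Fin (m + 1) => M)
    { toFun := fun u => (b.flip u).compMultilinearMap X.toMultilinearMap
      map_add' := fun u v => by ext; simp
      map_smul' := fun r u => by ext; simp }
  map_eq_zero_of_eq' v i j hv hij := by
    change b (X (Fin.tail v)) (v 0) = 0
    induction i using Fin.cases with
    | zero =>
      obtain ⟨j, rfl⟩ := Fin.exists_succ_eq.mpr hij.symm
      exact hv ▸ hX.apply_eq_zero (Fin.tail v) j
    | succ i =>
      induction j using Fin.cases with
      | zero => exact hv ▸ hX.apply_eq_zero (Fin.tail v) i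
      | succ j =>
        rw [X.map_eq_zero_of_eq (Fin.tail v) hv (fun h => hij (h ▸ rfl)), map_zero,
          LinearMap.zero_apply]

@[simp]
theorem volForm_apply (v : Fin (m + 1) → M) : hX.volForm v = b (X (Fin.tail v)) (v 0) := rfl

theorem volForm_ne_zero (hb : b.Nondegenerate) : hX.volForm ≠ 0 := by
  obtain ⟨v, hv⟩ := DFunLike.ne_iff.mp hX.ne_zero
  intro h
  refine hv (hb.1 _ fun u => ?_)
  simpa using DFunLike.congr_fun h (Fin.cons u v : Fin (m + 1) → M)

end VolForm

variable {F V : Type*} [Field F] [AddCommGroup V] [Module F V] {m : ℕ}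
  {b : LinearMap.BilinForm F V} {X : V [⋀^Fin m]→ₗ[F] V}

theorem apply_basis_succAbove_ne_zero (hX : IsOrthogonalProduct b X) (hb : b.Nondegenerate)
    (e : Basis (Fin (m + 1)) F V) (k : Fin (m + 1)) :
    b (X fun j => e (k.succAbove j)) (e k) ≠ 0 := by
  have h := (hX.volForm.map_basis_ne_zero_iff (e.reindex k.cycleRange)).mpr
    (hX.volForm_ne_zero hb)
  simpa [Fin.tail_def] using h

theorem apply_basis_succAbove (hX : IsOrthogonalProduct b X) (hb : b.Nondegenerate)
    (e : Basis (Fin (m + 1)) F V) (k : Fin (m + 1)) :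
    X (fun j => e (k.succAbove j)) =
      b (X fun j => e (k.succAbove j)) (e k) • b.dualBasis hb e k := by
  refine (b.dualBasis hb e).ext_elem fun i => ?_
  rw [map_smul, Basis.repr_self, LinearMap.BilinForm.dualBasis_repr_apply, Finsupp.smul_single,
    smul_eq_mul, mul_one]
  obtain rfl | ⟨j, rfl⟩ := k.eq_self_or_eq_succAbove i
  · rw [Finsupp.single_eq_same]
  · rw [Finsupp.single_eq_of_ne (k.succAbove_ne j)]
    exact hX.apply_eq_zero _ j

end IsOrthogonalProduct

/-- A grading of the module `M` with product `X` by the abelian monoid `G`. The decomposition of `M`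
is a family of submodules satisfying `DirectSum.IsInternal`. -/
structure IsGrading {R M G : Type*} [CommRing R] [AddCommGroup M] [Module R M] [CommMonoid G]
    [DecidableEq G] {m : ℕ} (X : M [⋀^Fin m]→ₗ[R] M) (𝒱 : G → Submodule R M) : Prop where
  isInternal : DirectSum.IsInternal 𝒱
  map_mem : ∀ (g : Fin m → G) (v : Fin m → M), (∀ i, v i ∈ 𝒱 (g i)) → X v ∈ 𝒱 (∏ i, g i)

namespace IsGrading

variable {F V G : Type*} [Field F] [AddCommGroup V] [Module F V] [CommMonoid G] [DecidableEq G]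
  {m : ℕ} {b : LinearMap.BilinForm F V} {X : V [⋀^Fin m]→ₗ[F] V} {𝒱 : G → Submodule F V}
  {e : Basis (Fin (m + 1)) F V} {d : Fin (m + 1) → G}

theorem dualBasis_mem (h𝒱 : IsGrading X 𝒱) (hX : IsOrthogonalProduct b X) (hb : b.Nondegenerate)
    (he : ∀ i, e i ∈ 𝒱 (d i)) (k : Fin (m + 1)) :
    b.dualBasis hb e k ∈ 𝒱 (∏ j, d (k.succAbove j)) := by
  rw [← Submodule.smul_mem_iff _ (hX.apply_basis_succAbove_ne_zero hb e k),
    ← hX.apply_basis_succAbove]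
  exact h𝒱.map_mem _ _ fun j => he _

theorem mem_iff (h𝒱 : IsGrading X 𝒱) (hX : IsOrthogonalProduct b X) (hb : b.Nondegenerate)
    (he : ∀ i, e i ∈ 𝒱 (d i)) {g : G} {u : V} :
    u ∈ 𝒱 g ↔ ∀ k, ∏ j, d (k.succAbove j) ≠ g → b u (e k) = 0 := by
  simp_rw [← LinearMap.BilinForm.dualBasis_repr_apply hb e]
  exact mem_iff_repr_eq_zero_of_homogeneous h𝒱.isInternal.submodule_iSupIndep _
    (h𝒱.dualBasis_mem hX hb he)

end IsGrading

section Isomorphisms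

variable {F V W : Type*} [Field F] [AddCommGroup V] [Module F V] [AddCommGroup W] [Module F W]
  {m : ℕ} {X : V [⋀^Fin m]→ₗ[F] V} {Y : W [⋀^Fin m]→ₗ[F] W}

theorem exists_smul_isomorphism_of_map_eq_smul [IsAlgClosed F] (hm : 2 ≤ m) {φ : V ≃ₗ[F] W} {a : F}
    (ha : a ≠ 0) (hφ : ∀ v, Y (fun i => φ (v i)) = a • φ (X v)) :
    ∃ t : Fˣ, ∀ v, (t • φ) (X v) = Y fun i => (t • φ) (v i) := by
  obtain ⟨t, ht⟩ := IsAlgClosed.exists_pow_nat_eq a⁻¹ (n := m - 1) (by omega)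
  have ht0 : t ≠ 0 := by
    rintro rfl
    rw [zero_pow (by omega)] at ht
    exact inv_ne_zero ha ht.symm
  have htm : t ^ m * a = t := by
    rw [← Nat.sub_add_cancel (by omega : 1 ≤ m), pow_succ, ht, mul_right_comm, inv_mul_cancel₀ ha,
      one_mul]
  refine ⟨Units.mk0 t ht0, fun v => ?_⟩
  calc t • φ (X v) = t ^ m • Y (fun i => φ (v i)) := by rw [hφ, smul_smul, htm]
    _ = Y fun i => t • φ (v i) := by
      simpa using (Y.map_smul_univ (fun _ => t) fun i => φ (v i)).symm

variable [FiniteDimensional F V] {b : LinearMap.BilinForm F V} {c : LinearMap.BilinForm F W}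

theorem exists_map_eq_smul_of_isometry (hV : finrank F V = m + 1) (hb : b.Nondegenerate)
    (hc : c.Nondegenerate) (hX : IsOrthogonalProduct b X) (hY : IsOrthogonalProduct c Y)
    (φ : V ≃ₗ[F] W) (hφ : ∀ u v, c (φ u) (φ v) = b u v) :
    ∃ a : F, a ≠ 0 ∧ ∀ v : Fin m → V, Y (fun i => φ (v i)) = a • φ (X v) := by
  have pullback_ne_zero : hY.volForm.compLinearMap (φ : V →ₗ[F] W) ≠ 0 :=
    (AlternatingMap.compLinearEquiv_eq_zero_iff _ φ).not.mpr (hY.volForm_ne_zero hc)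
  obtain ⟨a, ha, h⟩ := exists_eq_smul_of_ne_zero (finBasisOfFinrankEq F V hV) pullback_ne_zero
    (hX.volForm_ne_zero hb)
  refine ⟨a, ha, fun v => sub_eq_zero.mp (hc.1 _ fun w => ?_)⟩
  obtain ⟨u, rfl⟩ := φ.surjective w
  have huv : c (Y fun i => φ (v i)) (φ u) = a * b (X v) u :=
    DFunLike.congr_fun h (Fin.cons u v : Fin (m + 1) → V)
  simp [huv, hφ]

theorem exists_isometry_map_grading_eq [IsAlgClosed F] [FiniteDimensional F W] (h2 : (2 : F) ≠ 0)
    (hV : finrank F V = m + 1) (hb : b.Nondegenerate) (hb_symm : b.IsSymm) (hc : c.Nondegenerate)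
    (hc_symm : c.IsSymm) (hX : IsOrthogonalProduct b X) (hY : IsOrthogonalProduct c Y)
    {G : Type*} [CommMonoid G] [DecidableEq G] {𝒱 : G → Submodule F V} {𝒲 : G → Submodule F W}
    (h𝒱 : IsGrading X 𝒱) (h𝒲 : IsGrading Y 𝒲) (hfin : ∀ g, finrank F (𝒱 g) = finrank F (𝒲 g)) :
    ∃ φ : V ≃ₗ[F] W, (∀ u v, c (φ u) (φ v) = b u v) ∧
      ∀ g, (𝒱 g).map (φ : V →ₗ[F] W) = 𝒲 g := by
  obtain ⟨d, e, e', he, he'⟩ :=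
    exists_homogeneous_bases_of_finrank_eq h𝒱.isInternal h𝒲.isInternal hfin hV
  let ψ : V ≃ₗ[F] W := e.equiv e' (Equiv.refl _)
  have hψe (k : Fin (m + 1)) : ψ (e k) = e' k := e.equiv_apply k e' _
  have hψ (g : G) : (𝒱 g).map (ψ : V →ₗ[F] W) = 𝒲 g :=
    map_equiv_eq_of_homogeneous h𝒱.isInternal.submodule_iSupIndep
      h𝒲.isInternal.submodule_iSupIndep he he' g
  let S : Module.End F V :=
    LinearMap.BilinForm.symmCompOfNondegenerate (c.compl₁₂ (ψ : V →ₗ[F] W) ψ) b hb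
  have hS (u v : V) : b (S u) v = c (ψ u) (ψ v) :=
    LinearMap.BilinForm.symmCompOfNondegenerate_left_apply _ hb v u
  have hS_invt (g : G) : 𝒱 g ∈ S.invtSubmodule := by
    intro u hu
    have hψu : ψ u ∈ 𝒲 g := hψ g ▸ Submodule.mem_map_of_mem hu
    refine (h𝒱.mem_iff hX hb he).mpr fun k hk => ?_
    rw [hS, hψe]
    exact (h𝒲.mem_iff hY hc he').mp hψu k hk
  obtain ⟨φ, hφ, hφψ⟩ := exists_isometry_map_eq h2 hb_symm hc_symm hc ψ hS
  exact ⟨φ, hφ, fun g => (hφψ _ (hS_invt g)).trans (hψ g)⟩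

end Isomorphisms

theorem stmt16_general {F V W G : Type*} [Field F] [IsAlgClosed F] [AddCommGroup V] [Module F V]
    [FiniteDimensional F V] [AddCommGroup W] [Module F W] [FiniteDimensional F W] [CommMonoid G]
    [DecidableEq G] (h2 : (2 : F) ≠ 0) {m : ℕ} (hm : 2 ≤ m) (hV : finrank F V = m + 1)
    {b : LinearMap.BilinForm F V} (hb : b.Nondegenerate) (hb_symm : b.IsSymm)
    {c : LinearMap.BilinForm F W} (hc : c.Nondegenerate) (hc_symm : c.IsSymm)
    {X : V [⋀^Fin m]→ₗ[F] V} {Y : W [⋀^Fin m]→ₗ[F] W}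
    (hX : IsOrthogonalProduct b X) (hY : IsOrthogonalProduct c Y)
    {𝒱 : G → Submodule F V} {𝒲 : G → Submodule F W} (h𝒱 : IsGrading X 𝒱) (h𝒲 : IsGrading Y 𝒲) :
    (∃ φ : V ≃ₗ[F] W, (∀ v, φ (X v) = Y fun i => φ (v i)) ∧
      ∀ g, (𝒱 g).map (φ : V →ₗ[F] W) = 𝒲 g) ↔
    ∀ g, finrank F (𝒱 g) = finrank F (𝒲 g) := by
  constructor
  · rintro ⟨φ, -, hφ⟩ g
    rw [← hφ g, LinearEquiv.finrank_map_eq]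
  · intro hfin
    obtain ⟨φ, hφ, hφ_map⟩ :=
      exists_isometry_map_grading_eq h2 hV hb hb_symm hc hc_symm hX hY h𝒱 h𝒲 hfin
    obtain ⟨a, ha, hφ_smul⟩ := exists_map_eq_smul_of_isometry hV hb hc hX hY φ hφ
    obtain ⟨t, ht⟩ := exists_smul_isomorphism_of_map_eq_smul hm ha hφ_smul
    refine ⟨t • φ, ht, fun g => ?_⟩
    rw [LinearEquiv.toLinearMap_smul, Submodule.map_smul _ _ _ t.ne_zero, hφ_map]

/-- two `G`-gradings of an alternating `(n-1)`-fold cross product `(V, X)`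
are isomorphic if and only if the dimensions of corresponding homogeneous components
agree. -/
theorem stmt16 (F V : Type*) [Field F] [IsAlgClosed F] [AddCommGroup V] [Module F V]
    [FiniteDimensional F V]
    (hchar : (2 : F) ≠ 0)
    (n : ℕ) (hn : 3 ≤ n) (hdim : finrank F V = n)
    (b : LinearMap.BilinForm F V)
    (hbnd : b.Nondegenerate) (hbsymm : ∀ u v : V, b u v = b v u)
    (X : MultilinearMap F (fun _ : Fin (n - 1) => V) V)
    (halt : ∀ (v : Fin (n - 1) → V) (i j : Fin (n - 1)), i ≠ j → v i = v j → X v = 0)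
    (hX : IsCrossProduct b X)
    (G : Type*) [CommGroup G] [DecidableEq G]
    (𝒱 𝒲 : G → Submodule F V)
    (hVinternal : DirectSum.IsInternal 𝒱)
    (hVgraded : ∀ (g : Fin (n - 1) → G) (v : Fin (n - 1) → V),
      (∀ i, v i ∈ 𝒱 (g i)) → X v ∈ 𝒱 (∏ i, g i))
    (hWinternal : DirectSum.IsInternal 𝒲)
    (hWgraded : ∀ (g : Fin (n - 1) → G) (v : Fin (n - 1) → V),
      (∀ i, v i ∈ 𝒲 (g i)) → X v ∈ 𝒲 (∏ i, g i)) :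
    (∃ φ : V ≃ₗ[F] V,
      (∀ v : Fin (n - 1) → V, φ (X v) = X (fun i => φ (v i))) ∧
      (∀ g : G, Submodule.map (φ : V →ₗ[F] V) (𝒱 g) = 𝒲 g)) ↔
    (∀ g : G, finrank F ↥(𝒱 g) = finrank F ↥(𝒲 g)) := by
  obtain ⟨m, rfl⟩ : ∃ m, n = m + 1 := ⟨n - 1, by omega⟩
  let X' : V [⋀^Fin m]→ₗ[F] V :=
    { X with map_eq_zero_of_eq' := fun v i j hv hij => halt v i j hij hv }
  have hX' : IsOrthogonalProduct b X' :=
    IsCrossProduct.isOrthogonalProduct hchar hbnd ⟨hbsymm⟩ (by omega) hX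
  exact stmt16_general hchar (by omega) hdim hbnd ⟨hbsymm⟩ hbnd ⟨hbsymm⟩ hX' hX'
    ⟨hVinternal, hVgraded⟩ ⟨hWinternal, hWgraded⟩
end

section
/- Let F be an algebraically closed field of characteristic different from 2, V an F-vector space of dimension n ≥ 3, X : V^{n−1} → V an alternating (n−1)-fold cross product relative to a nondegenerate symmetric bilinear form b, and G an abelian group. Suppose δ : G → ℕ is a function with finite support satisfying Σ_{g∈G} δ(g) = n and δ(g) = δ(g⁻¹h) for all g ∈ G, where h = ∏_{g∈G} g^{δ(g)}. Then there exists a G-grading V = ⊕_{g∈G} V_g on (V, X) with dim V_g = δ(g) for every g ∈ G. -/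
open Module

/-!
View `δ` as a multiset of degrees with product `h`. Its symmetry under `g ↦ g⁻¹ h` gives an
involution `σ` of an index set `ι` with a degree map `d` such that `d i * d (σ i) = h`. Over a
quadratically closed field of characteristic not two, `b` has a basis `e`, indexed by `ι`, whose
Gram matrix is the permutation matrix of `σ`: take `e i = a (f i + I f (σ i))` with `f` orthonormal,
`I² = -1` and `2 a² I = 1`. Give `e i` the degree `d i`.

The form `(w, v) ↦ b (X v) w` is alternating in all its `n` arguments, so on basis vectors it
vanishes unless each vector occurs exactly once, and then the degrees multiply to `h`. Since
`e (σ k)` is dual to `e k` and has degree `h / d k`, it follows that `e k` occurs in a product of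
basis vectors only if `d k` is the product of their degrees.
-/

section Gram

variable {F V ι : Type*} [Field F] [AddCommGroup V] [Module F V] [FiniteDimensional F V]
  [Fintype ι] [DecidableEq ι] {b : LinearMap.BilinForm F V}

theorem exists_orthonormal_family (hsq : ∀ a : F, IsSquare a) (hchar : (2 : F) ≠ 0)
    (hb : b.Nondegenerate) (hsymm : b.IsSymm) (hcard : Fintype.card ι = finrank F V) :
    ∃ f : ι → V, ∀ i j, b (f i) (f j) = if i = j then 1 else 0 := by
  have : Invertible (2 : F) := invertibleOfNonzero hchar
  obtain ⟨v, hv⟩ := LinearMap.BilinForm.exists_orthogonal_basis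
    (LinearMap.BilinForm.isSymm_iff.1 hsymm)
  have hne (i) : b (v i) (v i) ≠ 0 := hv.not_isOrtho_basis_self_of_separatingLeft hb.1 i
  choose z hz using fun i => hsq (b (v i) (v i))
  have hz0 (i) : z i ≠ 0 := fun h => hne i (by rw [hz i, h, zero_mul])
  let ε : ι ≃ Fin (finrank F V) := Fintype.equivFinOfCardEq hcard
  refine ⟨fun i => (z (ε i))⁻¹ • v (ε i), fun i j => ?_⟩
  obtain rfl | hij := eq_or_ne i j
  · simp [hz, hz0]
  · have : b (v (ε i)) (v (ε j)) = 0 := hv (ε.injective.ne hij)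
    simp [this, hij]

theorem exists_family_gram_eq_involution (hsq : ∀ a : F, IsSquare a) (hchar : (2 : F) ≠ 0)
    (hb : b.Nondegenerate) (hsymm : b.IsSymm) (hcard : Fintype.card ι = finrank F V)
    {σ : ι → ι} (hσ : σ.Involutive) :
    ∃ e : ι → V, ∀ i j, b (e i) (e j) = if σ i = j then 1 else 0 := by
  obtain ⟨f, hf⟩ := exists_orthonormal_family hsq hchar hb hsymm hcard
  obtain ⟨I, hI⟩ := hsq (-1)
  have hI0 : I ≠ 0 := by rintro rfl; simp at hI
  obtain ⟨a, ha⟩ := hsq (2 * I)⁻¹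
  have haI : a * a * (2 * I) = 1 := by rw [← ha, inv_mul_cancel₀ (mul_ne_zero hchar hI0)]
  refine ⟨fun i => a • (f i + I • f (σ i)), fun i j => ?_⟩
  have hswap : i = σ j ↔ σ i = j := hσ.eq_iff.symm
  calc b (a • (f i + I • f (σ i))) (a • (f j + I • f (σ j)))
      = a * a * (b (f i) (f j) + I * b (f i) (f (σ j)) + I * b (f (σ i)) (f j)
          + I * I * b (f (σ i)) (f (σ j))) := by
        simp only [map_add, map_smul, LinearMap.add_apply, LinearMap.smul_apply, smul_eq_mul]
        ring
    _ = a * a * (2 * I) * (if σ i = j then 1 else 0) := by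
        simp only [hf, hσ.injective.eq_iff, hswap, ← hI]
        ring
    _ = if σ i = j then 1 else 0 := by rw [haI, one_mul]

theorem exists_basis_gram_eq_involution (hsq : ∀ a : F, IsSquare a) (hchar : (2 : F) ≠ 0)
    (hb : b.Nondegenerate) (hsymm : b.IsSymm) (hcard : Fintype.card ι = finrank F V)
    {σ : ι → ι} (hσ : σ.Involutive) :
    ∃ e : Basis ι F V, ∀ i j, b (e i) (e j) = if σ i = j then 1 else 0 := by
  obtain ⟨e, he⟩ := exists_family_gram_eq_involution hsq hchar hb hsymm hcard hσ
  have hli : LinearIndependent F e :=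
    .of_pairwise_dual_eq_zero_one e (fun i => b (e (σ i)))
      (fun i j hij => by simp [he, hσ i, hij]) (fun i => by simp [he, hσ i])
  exact ⟨Basis.mk hli (hli.span_eq_top_of_card_eq_finrank' hcard).ge, by simpa using he⟩

end Gram

section Grading

variable {R V ι G : Type*} [Ring R] [AddCommGroup V] [Module R V]

/-- The homogeneous component of degree `g` in the grading of `V` which gives the basis vector
`e k` the degree `d k`. -/
def basisGrading (e : Basis ι R V) (d : ι → G) (g : G) : Submodule R V :=
  Submodule.span R (e '' (d ⁻¹' {g}))

theorem mem_basisGrading_iff {e : Basis ι R V} {d : ι → G} {g : G} {v : V} :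
    v ∈ basisGrading e d g ↔ ∀ k, e.repr v k ≠ 0 → d k = g := by
  rw [basisGrading, e.mem_span_image]
  simp [Set.subset_def]

theorem isInternal_basisGrading [DecidableEq G] (e : Basis ι R V) (d : ι → G) :
    DirectSum.IsInternal (basisGrading e d) := by
  refine DirectSum.isInternal_submodule_of_iSupIndep_of_iSup_eq_top (fun g => ?_) ?_
  · simp only [basisGrading, ← Submodule.span_iUnion, ← Set.image_iUnion]
    refine e.linearIndependent.disjoint_span_image ?_
    simp +contextual [Set.disjoint_left, eq_comm]
  · change ⨆ g, Submodule.span R (e '' (d ⁻¹' {g})) = ⊤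
    simp only [← Submodule.span_iUnion, ← Set.image_iUnion, ← Set.preimage_iUnion,
      Set.iUnion_of_singleton, Set.preimage_univ, Set.image_univ, e.span_eq]

theorem finrank_basisGrading [StrongRankCondition R] (e : Basis ι R V) (d : ι → G) (g : G) :
    finrank R (basisGrading e d g) = Nat.card {k // d k = g} := by
  have hli : LinearIndependent R fun k : d ⁻¹' {g} => e k :=
    e.linearIndependent.comp _ Subtype.val_injective
  rw [basisGrading, Set.image_eq_range]
  exact finrank_eq_nat_card_basis (Basis.span hli)

end Grading

section Multilinear

theorem multilinearMap_mem_of_forall_mem_span {R κ W : Type*} {V : κ → Type*} [CommSemiring R]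
    [Finite κ] [∀ i, AddCommMonoid (V i)] [∀ i, Module R (V i)] [AddCommMonoid W] [Module R W]
    (X : MultilinearMap R V W) {S : ∀ i, Set (V i)} {N : Submodule R W}
    (h : ∀ v, (∀ i, v i ∈ S i) → X v ∈ N) {v : ∀ i, V i}
    (hv : ∀ i, v i ∈ Submodule.span R (S i)) : X v ∈ N := by
  classical
  have := Fintype.ofFinite κ
  suffices ∀ t : Finset κ, ∀ v : ∀ i, V i, (∀ i ∈ t, v i ∈ Submodule.span R (S i)) →
      (∀ i ∉ t, v i ∈ S i) → X v ∈ N from this Finset.univ v (fun i _ => hv i) (by simp)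
  intro t
  induction t using Finset.induction_on with
  | empty => exact fun v _ hv => h v fun i => hv i (Finset.notMem_empty i)
  | insert j t hj ih =>
    intro v hv hv'
    have span_le : Submodule.span R (S j) ≤ N.comap (X.toLinearMap v j) := by
      refine Submodule.span_le.2 fun x hx => ih _ (fun i hi => ?_) fun i hi => ?_
      · have : i ≠ j := ne_of_mem_of_not_mem hi hj
        simpa [this] using hv i (Finset.mem_insert_of_mem hi)
      · obtain rfl | hij := eq_or_ne i j
        · simpa using hx
        · simpa [hij] using hv' i (by simp [hij, hi])
    simpa using span_le (hv j (Finset.mem_insert_self j t))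

variable {R V ι G : Type*} [CommRing R] [AddCommGroup V] [Module R V]
  {b : LinearMap.BilinForm R V} {σ : ι → ι} {e : Basis ι R V}

theorem repr_eq_apply_basis_involution [DecidableEq ι] (hσ : σ.Involutive)
    (he : ∀ i j, b (e i) (e j) = if σ i = j then 1 else 0) (v : V) (k : ι) :
    e.repr v k = b v (e (σ k)) := by
  have : e.coord k = b.flip (e (σ k)) :=
    e.ext fun i => by simp [he, hσ.injective.eq_iff, Finsupp.single_apply]
  exact DFunLike.congr_fun this v

variable [Fintype ι] {r : ℕ} {X : V [⋀^Fin r]→ₗ[R] V}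

theorem degree_mul_prod_eq_prod_of_apply_ne_zero [CommMonoid G] (hX : ∀ v i, b (X v) (v i) = 0)
    (hcard : Fintype.card ι = r + 1) {e : ι → V} (d : ι → G) {s : Fin r → ι} {k : ι}
    (h : b (X (e ∘ s)) (e k) ≠ 0) : d k * ∏ i, d (s i) = ∏ j, d j := by
  have hs : s.Injective := fun i j hij => by
    by_contra hne
    exact h (by rw [X.map_eq_zero_of_eq _ (congrArg e hij) hne]; simp)
  have hk : k ∉ Set.range s := by
    rintro ⟨i, rfl⟩
    exact h (hX (e ∘ s) i)
  have hbij : (Fin.cons k s : Fin (r + 1) → ι).Bijective :=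
    (Fintype.bijective_iff_injective_and_card _).2
      ⟨Fin.cons_injective_of_injective hk hs, by simp [hcard]⟩
  rw [← hbij.prod_comp, Fin.prod_univ_succ]
  simp

variable [DecidableEq ι] [CommGroup G]

theorem apply_basis_mem_basisGrading (hX : ∀ v i, b (X v) (v i) = 0)
    (hcard : Fintype.card ι = r + 1) (hσ : σ.Involutive)
    (he : ∀ i j, b (e i) (e j) = if σ i = j then 1 else 0)
    {d : ι → G} (hd : ∀ i, d (σ i) * d i = ∏ j, d j) (s : Fin r → ι) :
    X (e ∘ s) ∈ basisGrading e d (∏ i, d (s i)) := by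
  refine mem_basisGrading_iff.2 fun k hk => mul_left_cancel (a := d (σ k)) ?_
  rw [repr_eq_apply_basis_involution hσ he] at hk
  rw [hd, degree_mul_prod_eq_prod_of_apply_ne_zero hX hcard d hk]

theorem apply_mem_basisGrading (hX : ∀ v i, b (X v) (v i) = 0)
    (hcard : Fintype.card ι = r + 1) (hσ : σ.Involutive)
    (he : ∀ i j, b (e i) (e j) = if σ i = j then 1 else 0)
    {d : ι → G} (hd : ∀ i, d (σ i) * d i = ∏ j, d j) {g : Fin r → G} {v : Fin r → V}
    (hv : ∀ i, v i ∈ basisGrading e d (g i)) : X v ∈ basisGrading e d (∏ i, g i) := by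
  refine multilinearMap_mem_of_forall_mem_span X.toMultilinearMap (fun w hw => ?_) hv
  choose s hs hsw using hw
  obtain rfl : e ∘ s = w := funext hsw
  obtain rfl : d ∘ s = g := funext hs
  exact apply_basis_mem_basisGrading hX hcard hσ he hd s

end Multilinear

section Multiset

variable {G : Type*} [DecidableEq G]

theorem exists_multiset_count_eq [CommMonoid G] {δ : G → ℕ} (hδ : δ.support.Finite) :
    ∃ m : Multiset G, (∀ g, m.count g = δ g) ∧ Multiset.card m = ∑ᶠ g, δ g ∧
      m.prod = ∏ᶠ g, g ^ δ g := by
  let f : G →₀ ℕ := Finsupp.ofSupportFinite δ hδ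
  refine ⟨Finsupp.toMultiset f, Finsupp.count_toMultiset f, ?_, ?_⟩
  · rw [Finsupp.card_toMultiset]
    exact (finsum_eq_sum_of_support_subset δ (by simp [f, Finsupp.ofSupportFinite_support])).symm
  · rw [Finsupp.prod_toMultiset]
    refine (finprod_eq_prod_of_mulSupport_subset _ fun g hg => ?_).symm
    rw [Finset.mem_coe, Finsupp.mem_support_iff]
    exact fun h0 => hg (by simp [h0])

theorem exists_involutive_coe_eq {m : Multiset G} {f : G → G} (hf : f.Involutive)
    (hm : ∀ g, m.count (f g) = m.count g) :
    ∃ σ : m → m, σ.Involutive ∧ ∀ x, (σ x : G) = f x := by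
  refine ⟨fun x => ⟨f x, Fin.cast (hm x).symm x.2⟩, fun x => ?_, fun _ => rfl⟩
  exact m.coeEmbedding.injective (Prod.ext (hf x) rfl)

theorem natCard_subtype_coe_eq (m : Multiset G) (g : G) :
    Nat.card {x : m // (x : G) = g} = m.count g := by
  conv_rhs => rw [← m.map_univ_coe]
  rw [Multiset.count_map, Nat.card_eq_fintype_card, Fintype.card_subtype, Finset.card_def,
    Finset.filter_val]
  simp only [eq_comm]

end Multiset

theorem stmt17_general {F V G : Type*} [Field F] [AddCommGroup V] [Module F V]
    [FiniteDimensional F V] [CommGroup G] [DecidableEq G] {r : ℕ}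
    (hsq : ∀ a : F, IsSquare a) (hchar : (2 : F) ≠ 0) (hdim : finrank F V = r + 1)
    {b : LinearMap.BilinForm F V} (hb : b.Nondegenerate) (hsymm : b.IsSymm)
    {X : V [⋀^Fin r]→ₗ[F] V} (hX : ∀ v i, b (X v) (v i) = 0)
    {δ : G → ℕ} (hδfin : δ.support.Finite) (hδsum : ∑ᶠ g, δ g = r + 1)
    (hδsymm : ∀ g, δ g = δ (g⁻¹ * ∏ᶠ g' : G, g' ^ δ g')) :
    ∃ 𝒱 : G → Submodule F V, DirectSum.IsInternal 𝒱 ∧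
      (∀ (g : Fin r → G) (v : Fin r → V), (∀ i, v i ∈ 𝒱 (g i)) → X v ∈ 𝒱 (∏ i, g i)) ∧
      ∀ g, finrank F (𝒱 g) = δ g := by
  classical
  obtain ⟨m, hcount, hcard, hprod⟩ := exists_multiset_count_eq hδfin
  have hm : Fintype.card m = r + 1 := by rw [Multiset.card_coe, hcard, hδsum]
  have hreflect : Function.Involutive fun g : G => g⁻¹ * m.prod := fun g => by simp
  obtain ⟨σ, hσ, hσm⟩ := exists_involutive_coe_eq (m := m) hreflect fun g => by
    rw [hcount, hcount, hprod, ← hδsymm]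
  obtain ⟨e, he⟩ := exists_basis_gram_eq_involution hsq hchar hb hsymm (hm.trans hdim.symm) hσ
  have hd (x : m) : (σ x : G) * x = ∏ y : m, (y : G) := by
    rw [hσm, mul_right_comm, inv_mul_cancel, one_mul, Multiset.prod_eq_prod_coe]
  refine ⟨basisGrading e fun x => (x : G), isInternal_basisGrading e _,
    fun _ _ => apply_mem_basisGrading hX hm hσ he hd, fun g => ?_⟩
  rw [finrank_basisGrading, natCard_subtype_coe_eq, hcount]

/-- given `δ : G → ℕ` with finite support, `Σ δ(g) = n` and
`δ(g) = δ(g⁻¹h)` for all `g` (with `h = ∏_g g^δ(g)`), there exists a `G`-grading of the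
alternating `(n-1)`-fold cross product `(V, X)` with `dim V_g = δ(g)` for all `g`. -/
theorem stmt17 (F V : Type*) [Field F] [IsAlgClosed F] [AddCommGroup V] [Module F V]
    [FiniteDimensional F V]
    (hchar : (2 : F) ≠ 0)
    (n : ℕ) (hn : 3 ≤ n) (hdim : finrank F V = n)
    (b : LinearMap.BilinForm F V)
    (hbnd : b.Nondegenerate) (hbsymm : ∀ u v : V, b u v = b v u)
    (X : MultilinearMap F (fun _ : Fin (n - 1) => V) V)
    (halt : ∀ (v : Fin (n - 1) → V) (i j : Fin (n - 1)), i ≠ j → v i = v j → X v = 0)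
    (hX : IsCrossProduct b X)
    (G : Type*) [CommGroup G] [DecidableEq G]
    (δ : G → ℕ) (hδfin : (Function.support δ).Finite)
    (hδsum : ∑ᶠ g : G, δ g = n)
    (hδsymm : ∀ g : G, δ g = δ (g⁻¹ * ∏ᶠ g' : G, g' ^ (δ g'))) :
    ∃ 𝒱 : G → Submodule F V,
      DirectSum.IsInternal 𝒱 ∧
      (∀ (g : Fin (n - 1) → G) (v : Fin (n - 1) → V),
        (∀ i, v i ∈ 𝒱 (g i)) → X v ∈ 𝒱 (∏ i, g i)) ∧
      (∀ g : G, finrank F ↥(𝒱 g) = δ g) := by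
  obtain ⟨r, rfl⟩ : ∃ r, n = r + 1 := ⟨n - 1, by omega⟩
  exact stmt17_general IsAlgClosed.exists_eq_mul_self hchar hdim hbnd ⟨hbsymm⟩
    (X := { X with map_eq_zero_of_eq' := fun v i j hij hne => halt v i j hne hij }) hX.1
    hδfin hδsum hδsymm
end

section
/- Let q ≥ 2 and let U be the abelian group defined (written additively) as the quotient of the free abelian group ℤ^{2q} on generators y₁, z₁, …, y_q, z_q by the subgroup generated by the elements (y₁ + z₁) − (y_j + z_j) for 2 ≤ j ≤ q together with (y₁ + z₁) − ((y₁ + z₁) + (y₂ + z₂) + ⋯ + (y_q + z_q)). Then U is isomorphic to ℤ^q × ℤ/(q−1)ℤ. -/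
/-!
Write `s_j = y_j + z_j`. In any abelian group the relations `s₁ = s_j = ∑ s_i` generate exactly the
combinations `∑ c_j s_j` with `q - 1 ∣ ∑ c_j`: modulo the relations such a combination equals
`(∑ c_j) s₁`, and `(q - 1) s₁ = ∑ s_j - s₁ = 0`. These combinations are also the kernel of the
surjection onto `ℤ^q × ℤ/(q-1)` given by `y_j ↦ (e_j, 0)` and `z_j ↦ (-e_j, 1)`, so the first
isomorphism theorem applies.
-/

/-- The free abelian group on the `2q` generators `y₁, z₁, …, y_q, z_q`. -/
abbrev FreeAb18 (q : ℕ) : Type := (Fin q ⊕ Fin q) →₀ ℤ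

/-- The generator `y_j`. -/
noncomputable def gen18y (q : ℕ) (j : Fin q) : FreeAb18 q := Finsupp.single (Sum.inl j) 1

/-- The generator `z_j`. -/
noncomputable def gen18z (q : ℕ) (j : Fin q) : FreeAb18 q := Finsupp.single (Sum.inr j) 1

/-- The subgroup of relations: it is generated by the elements
`(y₁ + z₁) − (y_j + z_j)` for `2 ≤ j ≤ q`, together with
`(y₁ + z₁) − ((y₁ + z₁) + (y₂ + z₂) + ⋯ + (y_q + z_q))`. -/
noncomputable def rels18 (q : ℕ) (hq : 0 < q) : AddSubgroup (FreeAb18 q) :=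
  AddSubgroup.closure
    ({a | ∃ j : Fin q, j ≠ ⟨0, hq⟩ ∧
        a = (gen18y q ⟨0, hq⟩ + gen18z q ⟨0, hq⟩) - (gen18y q j + gen18z q j)} ∪
      {(gen18y q ⟨0, hq⟩ + gen18z q ⟨0, hq⟩) - ∑ j : Fin q, (gen18y q j + gen18z q j)})

section EqualSumRelations

variable {ι A : Type*} [Fintype ι] [AddCommGroup A]

/-- The subgroup of relations `s i₀ = s j = ∑ i, s i` for a finite family `s` in an abelian group;
the quotient by it is the universal one in which all `s j` and their sum coincide. The generators
are written as in `rels18`, which is the case `s j = y_j + z_j`. -/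
def equalSumRelations (s : ι → A) (i₀ : ι) : AddSubgroup A :=
  AddSubgroup.closure ({a | ∃ j, j ≠ i₀ ∧ a = s i₀ - s j} ∪ {s i₀ - ∑ j, s j})

theorem sub_mem_equalSumRelations (s : ι → A) (i₀ j : ι) :
    s i₀ - s j ∈ equalSumRelations s i₀ := by
  obtain rfl | hj := eq_or_ne j i₀
  · rw [sub_self]
    exact zero_mem _
  · exact AddSubgroup.subset_closure (Or.inl ⟨j, hj, rfl⟩)

theorem sub_sum_mem_equalSumRelations (s : ι → A) (i₀ : ι) :
    s i₀ - ∑ j, s j ∈ equalSumRelations s i₀ :=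
  AddSubgroup.subset_closure (Or.inr rfl)

theorem sum_zsmul_sub_sum_zsmul_mem_equalSumRelations (s : ι → A) (i₀ : ι) (c : ι → ℤ) :
    (∑ j, c j) • s i₀ - ∑ j, c j • s j ∈ equalSumRelations s i₀ := by
  rw [Finset.sum_smul, ← Finset.sum_sub_distrib]
  simp only [← smul_sub]
  exact sum_mem fun j _ ↦ zsmul_mem (sub_mem_equalSumRelations s i₀ j) (c j)

theorem card_sub_one_zsmul_mem_equalSumRelations (s : ι → A) (i₀ : ι) :
    ((Fintype.card ι : ℤ) - 1) • s i₀ ∈ equalSumRelations s i₀ := by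
  have h := sub_mem (sum_zsmul_sub_sum_zsmul_mem_equalSumRelations s i₀ 1)
    (sub_sum_mem_equalSumRelations s i₀)
  simpa [sub_smul] using h

theorem sum_zsmul_mem_equalSumRelations (s : ι → A) (i₀ : ι) {c : ι → ℤ}
    (hc : (Fintype.card ι : ℤ) - 1 ∣ ∑ j, c j) :
    ∑ j, c j • s j ∈ equalSumRelations s i₀ := by
  obtain ⟨k, hk⟩ := hc
  have h_base : (∑ j, c j) • s i₀ ∈ equalSumRelations s i₀ := by
    rw [hk, mul_comm, mul_smul]
    exact zsmul_mem (card_sub_one_zsmul_mem_equalSumRelations s i₀) k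
  have h := sub_mem h_base (sum_zsmul_sub_sum_zsmul_mem_equalSumRelations s i₀ c)
  rwa [sub_sub_cancel] at h

theorem mem_equalSumRelations_iff {s : ι → A} {i₀ : ι} {a : A} :
    a ∈ equalSumRelations s i₀ ↔
      ∃ c : ι → ℤ, (Fintype.card ι : ℤ) - 1 ∣ ∑ j, c j ∧ ∑ j, c j • s j = a := by
  classical
  refine ⟨fun ha ↦ ?_, ?_⟩
  · induction ha using AddSubgroup.closure_induction with
    | mem a ha =>
      obtain ⟨j, -, rfl⟩ | rfl := ha
      · exact ⟨Pi.single i₀ 1 - Pi.single j 1, by simp, by simp [sub_smul, Pi.single_apply]⟩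
      · refine ⟨Pi.single i₀ 1 - 1, ?_, by simp [sub_smul, Pi.single_apply]⟩
        rw [← dvd_neg]
        simp
    | zero => exact ⟨0, by simp, by simp⟩
    | add a b _ _ ha hb =>
      obtain ⟨c, hc, rfl⟩ := ha
      obtain ⟨d, hd, rfl⟩ := hb
      exact ⟨c + d, by simpa [Finset.sum_add_distrib] using dvd_add hc hd,
        by simp [add_smul, Finset.sum_add_distrib]⟩
    | neg a _ ha =>
      obtain ⟨c, hc, rfl⟩ := ha
      exact ⟨-c, by simpa using hc, by simp⟩
  · rintro ⟨c, hc, rfl⟩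
    exact sum_zsmul_mem_equalSumRelations s i₀ hc

end EqualSumRelations

section PairedGenerators

variable {ι : Type*}

/-- The sum `y_j + z_j` of paired generators of the free abelian group on `ι ⊕ ι`, where `y_j` and
`z_j` are the basis vectors at `Sum.inl j` and `Sum.inr j`. -/
noncomputable def pairSum (j : ι) : ι ⊕ ι →₀ ℤ :=
  Finsupp.single (Sum.inl j) 1 + Finsupp.single (Sum.inr j) 1

variable [Fintype ι]

theorem sum_zsmul_pairSum (c : ι → ℤ) :
    ∑ j, c j • pairSum j = Finsupp.equivFunOnFinite.symm (Sum.elim c c) := by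
  classical
  ext (i | i) <;> simp [pairSum, Finsupp.finsetSum_apply, Finsupp.single_apply]

variable (ι) in
/-- The homomorphism `y_j ↦ (e_j, 0)`, `z_j ↦ (-e_j, 1)` on the free abelian group on `ι ⊕ ι`,
encoded by its coordinates; for `n = |ι| - 1` its kernel is `equalSumRelations pairSum i₀`. -/
def pairHom (n : ℕ) : (ι ⊕ ι →₀ ℤ) →+ (ι → ℤ) × ZMod n where
  toFun a := (fun j ↦ a (Sum.inl j) - a (Sum.inr j), ((∑ j, a (Sum.inr j) : ℤ) : ZMod n))
  map_zero' := by ext <;> simp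
  map_add' a b := by
    ext
    · simp [add_sub_add_comm]
    · simp [Finset.sum_add_distrib]

theorem pairHom_surjective [Nonempty ι] (n : ℕ) : Function.Surjective (pairHom ι n) := by
  classical
  rintro ⟨v, t⟩
  obtain ⟨m, rfl⟩ := ZMod.intCast_surjective t
  obtain ⟨i₀⟩ := ‹Nonempty ι›
  let w : ι → ℤ := Pi.single i₀ m
  refine ⟨Finsupp.equivFunOnFinite.symm (Sum.elim (v + w) w), ?_⟩
  ext <;> simp [pairHom, w, -Int.cast_sum]

theorem mem_ker_pairHom_iff {n : ℕ} {a : ι ⊕ ι →₀ ℤ} :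
    a ∈ (pairHom ι n).ker ↔ ∃ c : ι → ℤ, (n : ℤ) ∣ ∑ j, c j ∧ ∑ j, c j • pairSum j = a := by
  have h_ker : a ∈ (pairHom ι n).ker ↔
      (∀ j, a (Sum.inl j) = a (Sum.inr j)) ∧ (n : ℤ) ∣ ∑ j, a (Sum.inr j) := by
    rw [← ZMod.intCast_zmod_eq_zero_iff_dvd, AddMonoidHom.mem_ker, Prod.ext_iff, funext_iff]
    exact and_congr_left' (forall_congr' fun j ↦ sub_eq_zero)
  simp only [h_ker, sum_zsmul_pairSum]
  constructor
  · rintro ⟨h_eq, h_dvd⟩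
    refine ⟨fun j ↦ a (Sum.inr j), h_dvd, ?_⟩
    ext (j | j) <;> simp [h_eq]
  · rintro ⟨c, hc, rfl⟩
    exact ⟨fun _ ↦ rfl, hc⟩

theorem equalSumRelations_pairSum_eq_ker (i₀ : ι) :
    equalSumRelations pairSum i₀ = (pairHom ι (Fintype.card ι - 1)).ker := by
  have h_cast : ((Fintype.card ι - 1 : ℕ) : ℤ) = Fintype.card ι - 1 :=
    Nat.cast_pred (Fintype.card_pos_iff.2 ⟨i₀⟩)
  ext a
  rw [mem_equalSumRelations_iff, mem_ker_pairHom_iff, h_cast]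

end PairedGenerators

theorem rels18_eq_ker_pairHom (q : ℕ) (hq : 0 < q) :
    rels18 q hq = (pairHom (Fin q) (q - 1)).ker := by
  have h_rels : rels18 q hq = equalSumRelations pairSum ⟨0, hq⟩ := rfl
  rw [h_rels, equalSumRelations_pairSum_eq_ker, Fintype.card_fin]

/-- the abelian group with generators `y₁, z₁, …, y_q, z_q` and relations
`y₁z₁ = y₂z₂ = ⋯ = y_qz_q = y₁z₁y₂z₂⋯y_qz_q` is isomorphic to `ℤ^q × ℤ/(q−1)ℤ`. -/
theorem stmt18 (q : ℕ) (hq : 2 ≤ q) :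
    Nonempty ((FreeAb18 q ⧸ rels18 q (by omega)) ≃+ ((Fin q → ℤ) × ZMod (q - 1))) := by
  have : NeZero q := ⟨by omega⟩
  exact ⟨(QuotientAddGroup.quotientAddEquivOfEq (rels18_eq_ker_pairHom q (by omega))).trans
    (QuotientAddGroup.quotientKerEquivOfSurjective _ (pairHom_surjective (q - 1)))⟩
end
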